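/- arXiv:2411.11261 — 4 statements merged into one kernel-verified Lean document; each statement's English description precedes it below -/
import Mathlib

section
/- If a subspace 𝔳 ⊆ 𝔭 satisfies R(X,Y)Z ∈ 𝔳 for all X, Y, Z ∈ 𝔳, and 𝔳 contains a nonzero vector of 𝔭₁ or a nonzero vector of 𝔭₂, then 𝔳 = (𝔳 ∩ 𝔭₁) ⊕ (𝔳 ∩ 𝔭₂). (Algebraic form of: every totally geodesic subspace of nearly Kähler S³×S³ containing a nonzero vertical or horizontal vector of the fibration S³×S³ → S³ is well-positioned.) -/
/-! The idea: the Jacobi operator `Y ↦ R(a, Y)a` of a vertical or horizontal vector `a` preserves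
`𝔭₁` and `𝔭₂`, and on the two factors it acts with different nonzero eigenvalues.

Write the elements of `𝔭` as `vert P + horiz Q` with `P, Q ∈ 𝔰𝔲(2)`, where `vert P = (P, -2P, P)`
and `horiz Q = (Q, 0, -Q)`. Splitting commutators into their `𝔨`- and `𝔭`-parts gives, with
`P' = [A,[A,P]]` and `Q' = [A,[A,Q]]`,
* `R(a, Y)a = (9/4) vert P' + (1/4) horiz Q'` for `a = vert A` (`jacobi_vert`),
* `R(a, Y)a = (1/12) vert P' + (3/4) horiz Q'` for `a = horiz A` (`jacobi_horiz`).

In `𝔰𝔲(2)` the map `(ad A)²` is multiplication by `-4|A|²` modulo `ℝ A` (`exists_ad_sq`). So if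
`a ∈ 𝔳` and `Y ∈ 𝔳`, applying the Jacobi operator once and twice and using that its two weights
differ shows that `vert P'` and `horiz Q'` lie in `𝔳` (`parts_mem`). Since `P' = -4|A|² P + c A`,
in the vertical case `vert P ∈ 𝔳`, hence also `horiz Q = Y - vert P ∈ 𝔳`; the horizontal case is
the same with the two factors exchanged. -/

/- Setup: the homogeneous nearly Kähler S³×S³ = SU(2)³/ΔSU(2). -/

noncomputable section
open Matrix

abbrev M2 := Matrix (Fin 2) (Fin 2) ℂ

/-- `𝔤 = 𝔰𝔲(2) ⊕ 𝔰𝔲(2) ⊕ 𝔰𝔲(2)` lives inside the product ring, with the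
componentwise commutator bracket. -/
abbrev T3 := M2 × M2 × M2

def Hm : M2 := !![Complex.I, 0; 0, -Complex.I]
def Em : M2 := !![0, -1; 1, 0]
def Fm : M2 := !![0, Complex.I; Complex.I, 0]

def e1 : T3 := (Real.sqrt 12)⁻¹ • ((Hm, -(2 : ℝ) • Hm, Hm) : T3)
def e2 : T3 := (Real.sqrt 12)⁻¹ • ((Em, -(2 : ℝ) • Em, Em) : T3)
def e3 : T3 := (Real.sqrt 12)⁻¹ • ((Fm, -(2 : ℝ) • Fm, Fm) : T3)
def e4 : T3 := (2 : ℝ)⁻¹ • ((Hm, 0, -Hm) : T3)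
def e5 : T3 := (2 : ℝ)⁻¹ • ((Em, 0, -Em) : T3)
def e6 : T3 := (2 : ℝ)⁻¹ • ((Fm, 0, -Fm) : T3)

/-- `𝔨 = Δ𝔰𝔲(2)`. -/
def kAlg : Submodule ℝ T3 :=
  Submodule.span ℝ {((Hm, Hm, Hm) : T3), ((Em, Em, Em) : T3), ((Fm, Fm, Fm) : T3)}

/-- `𝔭`, the orthogonal complement of `𝔨` in `𝔤`. -/
def pAlg : Submodule ℝ T3 := Submodule.span ℝ {e1, e2, e3, e4, e5, e6}

/-- `𝔤 = 𝔨 ⊕ 𝔭`. -/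
def gAlg : Submodule ℝ T3 := kAlg ⊔ pAlg

/-- vertical submodule `𝔭₁ = span{e₁,e₂,e₃}`. -/
def p1 : Submodule ℝ T3 := Submodule.span ℝ {e1, e2, e3}

/-- horizontal submodule `𝔭₂ = span{e₄,e₅,e₆}`. -/
def p2 : Submodule ℝ T3 := Submodule.span ℝ {e4, e5, e6}

/-- difference tensor `D_X Y = (1/2)[X,Y]_𝔭`. -/
def Dmap (πp : T3 → T3) (X Y : T3) : T3 := (2 : ℝ)⁻¹ • πp ⁅X, Y⁆

/-- curvature tensor
`R(X,Y)Z = D_X D_Y Z − D_Y D_X Z − [[X,Y]_𝔨, Z] − D_{[X,Y]_𝔭} Z`. -/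
def Rmap (πk πp : T3 → T3) (X Y Z : T3) : T3 :=
  Dmap πp X (Dmap πp Y Z) - Dmap πp Y (Dmap πp X Z) - ⁅πk ⁅X, Y⁆, Z⁆
    - Dmap πp (πp ⁅X, Y⁆) Z

/-- covariant derivative of the curvature,
`(∇_V R)(X,Y,Z) = D_V(R(X,Y)Z) − R(D_V X,Y)Z − R(X,D_V Y)Z − R(X,Y)(D_V Z)`. -/
def nablaR (πk πp : T3 → T3) (V X Y Z : T3) : T3 :=
  Dmap πp V (Rmap πk πp X Y Z) - Rmap πk πp (Dmap πp V X) Y Z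
    - Rmap πk πp X (Dmap πp V Y) Z - Rmap πk πp X Y (Dmap πp V Z)

/-! ### The Lie algebra `𝔰𝔲(2)` -/

-- Makes the commutator bracket on `M2` a Lie bracket, so that the general Lie algebra lemmas apply.
attribute [local instance] LieRing.ofAssociativeRing

/-- `𝔰𝔲(2)`, given by its basis `H`, `E`, `F`. -/
def su2 : Submodule ℝ M2 := Submodule.span ℝ {Hm, Em, Fm}

lemma mem_su2 {A : M2} : A ∈ su2 ↔ ∃ x y z : ℝ, x • Hm + y • Em + z • Fm = A :=
  Submodule.mem_span_triple

lemma lie_mem_su2 {A B : M2} (hA : A ∈ su2) (hB : B ∈ su2) : ⁅A, B⁆ ∈ su2 := by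
  obtain ⟨x, y, z, rfl⟩ := mem_su2.1 hA
  obtain ⟨p, q, r, rfl⟩ := mem_su2.1 hB
  -- the commutator is `-2` times the cross product in the basis `H`, `E`, `F`
  refine mem_su2.2 ⟨-2 * (y * r - z * q), -2 * (z * p - x * r), -2 * (x * q - y * p), ?_⟩
  ext i j
  fin_cases i <;> fin_cases j <;>
    simp [Hm, Em, Fm, Ring.lie_def] <;>
    ring_nf <;> simp only [Complex.I_sq] <;> ring

/-- The double cross product identity `a × (a × p) = (a·p) a - |a|² p`, in terms of commutators:
`[A,[A,P]]` corresponds to `4 a × (a × p)`, so that `n = -4|a|²`. -/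
lemma exists_ad_sq {A : M2} (hA : A ∈ su2) (h0 : A ≠ 0) :
    ∃ n : ℝ, n ≠ 0 ∧ ∀ P ∈ su2, ∃ c : ℝ, ⁅A, ⁅A, P⁆⁆ = n • P + c • A := by
  obtain ⟨x, y, z, rfl⟩ := mem_su2.1 hA
  refine ⟨-4 * (x ^ 2 + y ^ 2 + z ^ 2), fun h => h0 ?_, fun P hP => ?_⟩
  · have hx : x = 0 := by nlinarith [sq_nonneg x, sq_nonneg y, sq_nonneg z]
    have hy : y = 0 := by nlinarith [sq_nonneg x, sq_nonneg y, sq_nonneg z]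
    have hz : z = 0 := by nlinarith [sq_nonneg x, sq_nonneg y, sq_nonneg z]
    simp [hx, hy, hz]
  · obtain ⟨p, q, r, rfl⟩ := mem_su2.1 hP
    refine ⟨4 * (x * p + y * q + z * r), ?_⟩
    ext i j
    fin_cases i <;> fin_cases j <;>
      simp [Hm, Em, Fm, Ring.lie_def] <;>
      ring_nf <;> simp only [Complex.I_sq, Complex.I_pow_three] <;> ring

/-! ### Coordinates on `𝔨`, `𝔭₁` and `𝔭₂` -/

/-- The isomorphism `A ↦ (A, A, A)` from `𝔰𝔲(2)` onto `𝔨`. -/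
def diagEmb : M2 →ₗ[ℝ] T3 := LinearMap.id.prod (LinearMap.id.prod LinearMap.id)

/-- The parametrization `A ↦ (A, -2A, A)` of `𝔭₁`, without the normalizing factor `1/√12`. -/
def vert : M2 →ₗ[ℝ] T3 := LinearMap.id.prod (((-2 : ℝ) • LinearMap.id).prod LinearMap.id)

/-- The parametrization `A ↦ (A, 0, -A)` of `𝔭₂`, without the normalizing factor `1/2`. -/
def horiz : M2 →ₗ[ℝ] T3 := LinearMap.id.prod ((0 : M2 →ₗ[ℝ] M2).prod (-LinearMap.id))

lemma diagEmb_apply (A : M2) : diagEmb A = (A, A, A) := rfl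
lemma vert_apply (A : M2) : vert A = (A, (-2 : ℝ) • A, A) := rfl
lemma horiz_apply (A : M2) : horiz A = (A, 0, -A) := rfl

lemma kAlg_eq : kAlg = su2.map diagEmb := by
  rw [su2, Submodule.map_span, Set.image_insert_eq, Set.image_insert_eq, Set.image_singleton]
  rfl

lemma span_smul_triple {c : ℝ} (hc : c ≠ 0) (x y z : T3) :
    Submodule.span ℝ {c • x, c • y, c • z} = Submodule.span ℝ {x, y, z} := by
  simp only [Submodule.span_insert, Submodule.span_singleton_smul_eq (IsUnit.mk0 c hc)]

lemma p1_eq : p1 = su2.map vert := by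
  rw [su2, Submodule.map_span, Set.image_insert_eq, Set.image_insert_eq, Set.image_singleton]
  have h : (Real.sqrt 12)⁻¹ ≠ 0 := by positivity
  exact span_smul_triple h _ _ _

lemma p2_eq : p2 = su2.map horiz := by
  rw [su2, Submodule.map_span, Set.image_insert_eq, Set.image_insert_eq, Set.image_singleton]
  rw [← span_smul_triple (inv_ne_zero (two_ne_zero' ℝ))]
  rfl

lemma pAlg_eq : pAlg = p1 ⊔ p2 := by
  rw [pAlg, p1, p2, ← Submodule.span_union]
  congr 1
  ext
  simp only [Set.mem_insert_iff, Set.mem_singleton_iff, Set.mem_union]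
  tauto

lemma mem_pAlg {Z : T3} : Z ∈ pAlg ↔ ∃ P ∈ su2, ∃ Q ∈ su2, vert P + horiz Q = Z := by
  simp [pAlg_eq, p1_eq, p2_eq, Submodule.mem_sup]

/-- Commutators of elements of `𝔭`, split into their `𝔨`, `𝔭₁` and `𝔭₂` parts. -/
lemma lie_pAlg (A B P Q : M2) :
    ⁅vert A + horiz B, vert P + horiz Q⁆ =
      diagEmb ((2 : ℝ) • ⁅A, P⁆ + (2 / 3 : ℝ) • ⁅B, Q⁆)
        + (vert (-⁅A, P⁆ + (1 / 3 : ℝ) • ⁅B, Q⁆) + horiz (⁅A, Q⁆ + ⁅B, P⁆)) := by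
  refine Prod.ext ?_ (Prod.ext ?_ ?_)
  · change ⁅A + B, P + Q⁆ = _
    simp only [vert_apply, horiz_apply, diagEmb_apply, Prod.fst_add, add_lie, lie_add]
    module
  · change ⁅(-2 : ℝ) • A + 0, (-2 : ℝ) • P + 0⁆ = _
    simp only [vert_apply, horiz_apply, diagEmb_apply, Prod.fst_add, Prod.snd_add, add_zero,
      smul_lie, lie_smul]
    module
  · change ⁅A + -B, P + -Q⁆ = _
    simp only [vert_apply, horiz_apply, diagEmb_apply, Prod.snd_add, add_lie, lie_add, neg_lie,
      lie_neg]
    module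

lemma lie_diagEmb (C P Q : M2) :
    ⁅diagEmb C, vert P + horiz Q⁆ = vert ⁅C, P⁆ + horiz ⁅C, Q⁆ := by
  refine Prod.ext ?_ (Prod.ext ?_ ?_)
  · change ⁅C, P + Q⁆ = _
    simp [vert_apply, horiz_apply]
  · change ⁅C, (-2 : ℝ) • P + 0⁆ = _
    simp [vert_apply, horiz_apply]
  · change ⁅C, P + -Q⁆ = _
    simp [vert_apply, horiz_apply]

/-- The projections along `𝔤 = 𝔨 ⊕ 𝔭` are determined: `𝔨 ∩ 𝔭 = 0` because the components of an
element of `𝔨` are equal, whereas those of an element of `𝔭` sum to zero. -/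
lemma proj_eq {πk πp : T3 → T3}
    (hdec : ∀ Z ∈ gAlg, πk Z ∈ kAlg ∧ πp Z ∈ pAlg ∧ πk Z + πp Z = Z)
    {C P Q : M2} (hC : C ∈ su2) (hP : P ∈ su2) (hQ : Q ∈ su2) :
    πk (diagEmb C + (vert P + horiz Q)) = diagEmb C ∧
      πp (diagEmb C + (vert P + horiz Q)) = vert P + horiz Q := by
  have hk : diagEmb C ∈ kAlg := kAlg_eq ▸ Submodule.mem_map_of_mem hC
  have hp : vert P + horiz Q ∈ pAlg := mem_pAlg.2 ⟨P, hP, Q, hQ, rfl⟩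
  obtain ⟨h1, h2, h3⟩ := hdec _ (Submodule.add_mem_sup hk hp)
  rw [kAlg_eq] at h1
  obtain ⟨C', -, hC'⟩ := h1
  obtain ⟨P', -, Q', -, hpq⟩ := mem_pAlg.1 h2
  rw [← hC', ← hpq] at h3 ⊢
  have hCC : C' = C := by
    have e1 := congrArg Prod.fst h3
    have e2 := congrArg (fun t => t.2.1) h3
    have e3 := congrArg (fun t => t.2.2) h3
    simp only [diagEmb_apply, vert_apply, horiz_apply, Prod.fst_add, Prod.snd_add] at e1 e2 e3
    have e : (3 : ℝ) • C' = (3 : ℝ) • C := by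
      linear_combination (norm := module) e1 + e2 + e3
    exact smul_right_injective _ (three_ne_zero' ℝ) e
  subst hCC
  exact ⟨rfl, add_left_cancel h3⟩

lemma proj_lie {πk πp : T3 → T3}
    (hdec : ∀ Z ∈ gAlg, πk Z ∈ kAlg ∧ πp Z ∈ pAlg ∧ πk Z + πp Z = Z)
    {A B P Q : M2} (hA : A ∈ su2) (hB : B ∈ su2) (hP : P ∈ su2) (hQ : Q ∈ su2) :
    πk ⁅vert A + horiz B, vert P + horiz Q⁆ =
        diagEmb ((2 : ℝ) • ⁅A, P⁆ + (2 / 3 : ℝ) • ⁅B, Q⁆) ∧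
      πp ⁅vert A + horiz B, vert P + horiz Q⁆ =
        vert (-⁅A, P⁆ + (1 / 3 : ℝ) • ⁅B, Q⁆) + horiz (⁅A, Q⁆ + ⁅B, P⁆) := by
  rw [lie_pAlg]
  have hAP := lie_mem_su2 hA hP
  have hBQ := lie_mem_su2 hB hQ
  exact proj_eq hdec (su2.add_mem (su2.smul_mem _ hAP) (su2.smul_mem _ hBQ))
    (su2.add_mem (su2.neg_mem hAP) (su2.smul_mem _ hBQ))
    (su2.add_mem (lie_mem_su2 hA hQ) (lie_mem_su2 hB hP))

/-! ### The Jacobi operators of vertical and horizontal vectors -/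

/-- The difference tensor in the coordinates `vert P + horiz Q`; the memberships let the formula
be iterated. -/
lemma Dmap_eq {πk πp : T3 → T3}
    (hdec : ∀ Z ∈ gAlg, πk Z ∈ kAlg ∧ πp Z ∈ pAlg ∧ πk Z + πp Z = Z)
    {A B P Q : M2} (hA : A ∈ su2) (hB : B ∈ su2) (hP : P ∈ su2) (hQ : Q ∈ su2) :
    ∃ U ∈ su2, ∃ W ∈ su2,
      U = (2 : ℝ)⁻¹ • (-⁅A, P⁆ + (1 / 3 : ℝ) • ⁅B, Q⁆) ∧
      W = (2 : ℝ)⁻¹ • (⁅A, Q⁆ + ⁅B, P⁆) ∧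
      Dmap πp (vert A + horiz B) (vert P + horiz Q) = vert U + horiz W := by
  refine ⟨_, su2.smul_mem _ (su2.add_mem (su2.neg_mem (lie_mem_su2 hA hP))
      (su2.smul_mem _ (lie_mem_su2 hB hQ))), _,
    su2.smul_mem _ (su2.add_mem (lie_mem_su2 hA hQ) (lie_mem_su2 hB hP)), rfl, rfl, ?_⟩
  rw [Dmap, (proj_lie hdec hA hB hP hQ).2, smul_add, map_smul, map_smul]

/-- The Jacobi operator `Y ↦ R(X,Y)X` of `X = vert A + horiz B` at `Y = vert P + horiz Q`, expanded
from its definition: `vert U + horiz W` is `D_Y X` and `vert U' + horiz W'` is `[X,Y]_𝔭`. The term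
`D_Y D_X X` is absent because `D_X X = 0`. -/
lemma jacobi_eq {πk πp : T3 → T3}
    (hdec : ∀ Z ∈ gAlg, πk Z ∈ kAlg ∧ πp Z ∈ pAlg ∧ πk Z + πp Z = Z)
    {A B P Q : M2} (hA : A ∈ su2) (hB : B ∈ su2) (hP : P ∈ su2) (hQ : Q ∈ su2) :
    ∃ U W U' W' : M2,
      U = (2 : ℝ)⁻¹ • (-⁅P, A⁆ + (1 / 3 : ℝ) • ⁅Q, B⁆) ∧
      W = (2 : ℝ)⁻¹ • (⁅P, B⁆ + ⁅Q, A⁆) ∧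
      U' = -⁅A, P⁆ + (1 / 3 : ℝ) • ⁅B, Q⁆ ∧
      W' = ⁅A, Q⁆ + ⁅B, P⁆ ∧
      Rmap πk πp (vert A + horiz B) (vert P + horiz Q) (vert A + horiz B) =
        vert ((2 : ℝ)⁻¹ • (-⁅A, U⁆ + (1 / 3 : ℝ) • ⁅B, W⁆)
            - ⁅(2 : ℝ) • ⁅A, P⁆ + (2 / 3 : ℝ) • ⁅B, Q⁆, A⁆
            - (2 : ℝ)⁻¹ • (-⁅U', A⁆ + (1 / 3 : ℝ) • ⁅W', B⁆))
          + horiz ((2 : ℝ)⁻¹ • (⁅A, W⁆ + ⁅B, U⁆)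
            - ⁅(2 : ℝ) • ⁅A, P⁆ + (2 / 3 : ℝ) • ⁅B, Q⁆, B⁆
            - (2 : ℝ)⁻¹ • (⁅U', B⁆ + ⁅W', A⁆)) := by
  obtain ⟨U, hU, W, hW, eU, eW, hYX⟩ := Dmap_eq hdec hP hQ hA hB
  obtain ⟨U₁, -, W₁, -, eU₁, eW₁, hXYX⟩ := Dmap_eq hdec hA hB hU hW
  obtain ⟨U₀, hU₀, W₀, hW₀, eU₀, eW₀, hXX⟩ := Dmap_eq hdec hA hB hA hB
  obtain ⟨U₂, -, W₂, -, eU₂, eW₂, hYXX⟩ := Dmap_eq hdec hP hQ hU₀ hW₀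
  obtain ⟨hk, hp⟩ := proj_lie hdec hA hB hP hQ
  have hU' : -⁅A, P⁆ + (1 / 3 : ℝ) • ⁅B, Q⁆ ∈ su2 :=
    su2.add_mem (su2.neg_mem (lie_mem_su2 hA hP)) (su2.smul_mem _ (lie_mem_su2 hB hQ))
  have hW' : ⁅A, Q⁆ + ⁅B, P⁆ ∈ su2 := su2.add_mem (lie_mem_su2 hA hQ) (lie_mem_su2 hB hP)
  obtain ⟨U₃, -, W₃, -, eU₃, eW₃, hpX⟩ := Dmap_eq hdec hU' hW' hA hB
  refine ⟨U, W, _, _, eU, eW, rfl, rfl, ?_⟩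
  have zU : U₀ = 0 := by simp [eU₀]
  have zW : W₀ = 0 := by rw [eW₀, ← lie_skew A B, neg_add_cancel, smul_zero]
  rw [Rmap, hYX, hXYX, hXX, hYXX, hk, hp, hpX, lie_diagEmb,
    eU₂, eW₂, zU, zW, ← eU₁, ← eW₁, ← eU₃, ← eW₃]
  simp only [lie_zero, smul_zero, neg_zero, add_zero, map_zero, sub_zero, map_sub]
  abel

lemma jacobi_vert {πk πp : T3 → T3}
    (hdec : ∀ Z ∈ gAlg, πk Z ∈ kAlg ∧ πp Z ∈ pAlg ∧ πk Z + πp Z = Z)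
    {A P Q : M2} (hA : A ∈ su2) (hP : P ∈ su2) (hQ : Q ∈ su2) :
    Rmap πk πp (vert A) (vert P + horiz Q) (vert A) =
      (9 / 4 : ℝ) • vert ⁅A, ⁅A, P⁆⁆ + (1 / 4 : ℝ) • horiz ⁅A, ⁅A, Q⁆⁆ := by
  obtain ⟨U, W, U', W', rfl, rfl, rfl, rfl, h⟩ := jacobi_eq hdec hA su2.zero_mem hP hQ
  rw [map_zero, add_zero] at h
  rw [h, ← map_smul, ← map_smul]
  rw [← lie_skew P A, ← lie_skew Q A]
  simp only [lie_zero, zero_lie, smul_zero, add_zero, zero_add, sub_zero, lie_smul, smul_lie,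
    lie_neg, neg_lie, ← lie_skew A ⁅A, P⁆, ← lie_skew A ⁅A, Q⁆]
  congr 2 <;> module

lemma jacobi_horiz {πk πp : T3 → T3}
    (hdec : ∀ Z ∈ gAlg, πk Z ∈ kAlg ∧ πp Z ∈ pAlg ∧ πk Z + πp Z = Z)
    {A P Q : M2} (hA : A ∈ su2) (hP : P ∈ su2) (hQ : Q ∈ su2) :
    Rmap πk πp (horiz A) (vert P + horiz Q) (horiz A) =
      (1 / 12 : ℝ) • vert ⁅A, ⁅A, P⁆⁆ + (3 / 4 : ℝ) • horiz ⁅A, ⁅A, Q⁆⁆ := by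
  obtain ⟨U, W, U', W', rfl, rfl, rfl, rfl, h⟩ := jacobi_eq hdec su2.zero_mem hA hP hQ
  rw [map_zero, zero_add] at h
  rw [h, ← map_smul, ← map_smul]
  rw [← lie_skew P A, ← lie_skew Q A]
  simp only [lie_zero, zero_lie, smul_zero, add_zero, zero_add, sub_zero, lie_smul, smul_lie,
    lie_neg, neg_zero, ← lie_skew A ⁅A, P⁆, ← lie_skew A ⁅A, Q⁆]
  congr 2 <;> module

/-! ### Splitting the invariant subspace -/

/-- If `𝔳` is stable under an operator acting as `α (ad A)²` on the vertical and as `β (ad A)²` on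
the horizontal part, with `α ≠ β` both nonzero, then it contains the images under `(ad A)²` of the
two parts of each of its elements. The reason: `(ad A)²` acts on its own image as a
scalar `n ≠ 0`, so a second application of the operator multiplies the two parts by `n α` and
`n β`. -/
lemma parts_mem {v : Submodule ℝ T3} {A : M2} (hA : A ∈ su2) (h0 : A ≠ 0) {α β : ℝ}
    (hα : α ≠ 0) (hβ : β ≠ 0) (hαβ : α ≠ β)
    (hJ : ∀ P ∈ su2, ∀ Q ∈ su2, vert P + horiz Q ∈ v →
      α • vert ⁅A, ⁅A, P⁆⁆ + β • horiz ⁅A, ⁅A, Q⁆⁆ ∈ v)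
    {P Q : M2} (hP : P ∈ su2) (hQ : Q ∈ su2) (hv : vert P + horiz Q ∈ v) :
    vert ⁅A, ⁅A, P⁆⁆ ∈ v ∧ horiz ⁅A, ⁅A, Q⁆⁆ ∈ v := by
  obtain ⟨n, hn, h⟩ := exists_ad_sq hA h0
  have had : ∀ P ∈ su2, ⁅A, ⁅A, ⁅A, ⁅A, P⁆⁆⁆⁆ = n • ⁅A, ⁅A, P⁆⁆ := by
    intro P hP
    obtain ⟨c, hc⟩ := h P hP
    conv_lhs => rw [hc]
    simp only [lie_add, lie_smul, lie_self, smul_zero, add_zero]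
  have hP' := lie_mem_su2 hA (lie_mem_su2 hA hP)
  have hQ' := lie_mem_su2 hA (lie_mem_su2 hA hQ)
  have h1 := hJ P hP Q hQ hv
  have h2 := hJ _ (su2.smul_mem α hP') _ (su2.smul_mem β hQ') (by simpa only [map_smul] using h1)
  simp only [lie_smul, had P hP, had Q hQ, map_smul] at h2
  have hd : α - β ≠ 0 := sub_ne_zero.2 hαβ
  have hd' : β - α ≠ 0 := sub_ne_zero.2 hαβ.symm
  constructor
  · have h3 := v.smul_mem (α * n * (α - β))⁻¹ (v.sub_mem h2 (v.smul_mem (n * β) h1))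
    convert h3 using 1
    match_scalars <;> field_simp
    ring
  · have h3 := v.smul_mem (β * n * (β - α))⁻¹ (v.sub_mem h2 (v.smul_mem (n * α) h1))
    convert h3 using 1
    match_scalars <;> field_simp
    ring

/-- If a subspace `𝔳 ⊆ 𝔭` is curvature-invariant and contains
a nonzero vector of `𝔭₁` or of `𝔭₂`, then `𝔳 = (𝔳 ∩ 𝔭₁) ⊕ (𝔳 ∩ 𝔭₂)`
(it is well-positioned for the fibration `S³×S³ → S³`). -/
theorem wellPositioned_of_curvature_invariant_S3S3
    (πk πp : T3 → T3)
    (hdec : ∀ Z ∈ gAlg, πk Z ∈ kAlg ∧ πp Z ∈ pAlg ∧ πk Z + πp Z = Z)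
    (v : Submodule ℝ T3) (hvp : v ≤ pAlg)
    (hR : ∀ X ∈ v, ∀ Y ∈ v, ∀ Z ∈ v, Rmap πk πp X Y Z ∈ v)
    (hvec : (∃ x ∈ v, x ≠ 0 ∧ x ∈ p1) ∨ (∃ x ∈ v, x ≠ 0 ∧ x ∈ p2)) :
    v = (v ⊓ p1) ⊔ (v ⊓ p2) := by
  refine le_antisymm (fun Y hY => ?_) (sup_le inf_le_left inf_le_left)
  obtain ⟨P, hP, Q, hQ, rfl⟩ := mem_pAlg.1 (hvp hY)
  suffices h : vert P ∈ v ∨ horiz Q ∈ v by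
    have h' : vert P ∈ v ∧ horiz Q ∈ v := by
      rcases h with h | h
      · exact ⟨h, (v.add_mem_iff_right h).1 hY⟩
      · exact ⟨(v.add_mem_iff_left h).1 hY, h⟩
    exact Submodule.add_mem_sup ⟨h'.1, p1_eq ▸ Submodule.mem_map_of_mem hP⟩
      ⟨h'.2, p2_eq ▸ Submodule.mem_map_of_mem hQ⟩
  rcases hvec with ⟨x, hx, hx0, hx1⟩ | ⟨x, hx, hx0, hx2⟩
  · left
    rw [p1_eq] at hx1
    obtain ⟨A, hA, rfl⟩ := hx1
    have hA0 : A ≠ 0 := by rintro rfl; exact hx0 (map_zero _)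
    have hP' := (parts_mem hA hA0 (α := 9 / 4) (β := 1 / 4) (by norm_num) (by norm_num)
      (by norm_num) (fun P hP Q hQ h => jacobi_vert hdec hA hP hQ ▸ hR _ hx _ h _ hx) hP hQ hY).1
    obtain ⟨n, hn, h⟩ := exists_ad_sq hA hA0
    obtain ⟨c, hc⟩ := h P hP
    rw [hc, map_add, map_smul, map_smul, v.add_mem_iff_left (v.smul_mem c hx)] at hP'
    exact (v.smul_mem_iff hn).1 hP'
  · right
    rw [p2_eq] at hx2
    obtain ⟨A, hA, rfl⟩ := hx2
    have hA0 : A ≠ 0 := by rintro rfl; exact hx0 (map_zero _)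
    have hQ' := (parts_mem hA hA0 (α := 1 / 12) (β := 3 / 4) (by norm_num) (by norm_num)
      (by norm_num) (fun P hP Q hQ h => jacobi_horiz hdec hA hP hQ ▸ hR _ hx _ h _ hx) hP hQ hY).2
    obtain ⟨n, hn, h⟩ := exists_ad_sq hA hA0
    obtain ⟨c, hc⟩ := h Q hQ
    rw [hc, map_add, map_smul, map_smul, v.add_mem_iff_left (v.smul_mem c hx)] at hQ'
    exact (v.smul_mem_iff hn).1 hQ'

end
end

section
/- There is no 4-dimensional subspace 𝔳 of 𝔭 such that R(X,Y)Z ∈ 𝔳 and (∇_V R)(X,Y,Z) ∈ 𝔳 for all X, Y, Z, V ∈ 𝔳. (Algebraic core of: the homogeneous nearly Kähler S³×S³ admits no codimension-two totally geodesic submanifolds.) -/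
/-!
Identify `𝔭` with `ℝ³ × ℝ³` through `P (a, b) = (a + b, -2a, a - b)`, where `ℝ³ ≅ 𝔰𝔲(2)` turns the
bracket into `-2` times the cross product (`brk_P`). In these coordinates `D` and `R` are explicit
(`Dmap_P`, `Rmap_P`, `nablaR_P`), and an invariant `4`-dimensional subspace becomes a
`4`-dimensional `w ≤ ℝ³ × ℝ³` invariant under the coordinate tensors `Rv` and `Nv`.

For dimension reasons `w` contains some `X = (0, u)` with `u ≠ 0`. The Jacobi operator
`Y ↦ R(Y, X)X` has eigenspaces `{(su, tu)}`, `u^⊥ × 0` and `0 × u^⊥`, with pairwise distinct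
eigenvalues `0`, `|u|²/3`, `3|u|²`, so `w` splits accordingly (`split`). The operator
`Y ↦ (∇_X R)(Y, X, X)` is the commutator of `D_X` with the Jacobi operator; up to nonzero factors it
maps `(y, 0)` to `(0, u × y)` and `(0, y)` to `(u × y, 0)` for `y ⊥ u` (`swap_fst`, `swap_snd`).
So the last two summands of `w` have the same dimension `d`. If `d = 0`, then `dim w ≤ 2`
(`exists_perp`); if `d = 2`, then `dim w ≥ 5` (`not_both`). Hence `d = 1`, and `(u, 0) ∈ w`, since
otherwise `dim w ≤ 3` (`fst_mem`). But then `R((0, y), (u, 0))(0, u)`, which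
is `|u|² (y, 0)` for `y ⊥ u` (`mixed`), forces the two summands to be the same line in `u^⊥`, and that line
would be stable under the quarter turn `y ↦ u × y`, which is absurd.
-/


/- Setup: the homogeneous nearly Kähler S³×S³ = SU(2)³/ΔSU(2). -/

noncomputable section
open Matrix

/-! ### Coordinates on `𝔭` -/

/-- The isomorphism `ℝ³ ≅ 𝔰𝔲(2)` given by the basis `H, E, F`. -/
def S3 (a : Fin 3 → ℝ) : M2 := a 0 • Hm + a 1 • Em + a 2 • Fm

/-- The coordinates `(a, b) ↦ (a + b, -2a, a - b)` on `𝔭`; up to scaling, the two factors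
are the coordinates in `e₁, e₂, e₃` and in `e₄, e₅, e₆`. -/
def P : ((Fin 3 → ℝ) × (Fin 3 → ℝ)) →ₗ[ℝ] T3 where
  toFun p := (S3 (p.1 + p.2), S3 (-(2 : ℝ) • p.1), S3 (p.1 - p.2))
  map_add' p q := by
    ext <;> simp [S3] <;> ring
  map_smul' c p := by
    ext <;> simp [S3] <;> ring

/-- The diagonal embedding of `ℝ³ ≅ 𝔰𝔲(2)`, with image `𝔨`. -/
def K (a : Fin 3 → ℝ) : T3 := (S3 a, S3 a, S3 a)

/-- The difference tensor `D` in the coordinates `P`. -/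
def Dv (p q : (Fin 3 → ℝ) × (Fin 3 → ℝ)) : (Fin 3 → ℝ) × (Fin 3 → ℝ) :=
  (crossProduct p.1 q.1 - (1 / 3 : ℝ) • crossProduct p.2 q.2,
    -crossProduct p.1 q.2 - crossProduct p.2 q.1)

/-- The `𝔨`-component of the bracket of two elements of `𝔭`, in coordinates. -/
def Kv (p q : (Fin 3 → ℝ) × (Fin 3 → ℝ)) : Fin 3 → ℝ :=
  -(4 : ℝ) • crossProduct p.1 q.1 - (4 / 3 : ℝ) • crossProduct p.2 q.2

/-- The curvature tensor in the coordinates `P`. -/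
def Rv (p q r : (Fin 3 → ℝ) × (Fin 3 → ℝ)) : (Fin 3 → ℝ) × (Fin 3 → ℝ) :=
  Dv p (Dv q r) - Dv q (Dv p r)
    - (-(2 : ℝ) • crossProduct (Kv p q) r.1, -(2 : ℝ) • crossProduct (Kv p q) r.2)
    - Dv ((2 : ℝ) • Dv p q) r

/-- The covariant derivative of the curvature in the coordinates `P`. -/
def Nv (s p q r : (Fin 3 → ℝ) × (Fin 3 → ℝ)) : (Fin 3 → ℝ) × (Fin 3 → ℝ) :=
  Dv s (Rv p q r) - Rv (Dv s p) q r - Rv p (Dv s q) r - Rv p q (Dv s r)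

theorem S3_lie (a b : Fin 3 → ℝ) : ⁅S3 a, S3 b⁆ = S3 (-(2 : ℝ) • crossProduct a b) := by
  rw [Ring.lie_def]
  ext i j
  fin_cases i <;> fin_cases j <;>
    simp [S3, Hm, Em, Fm, cross_apply] <;>
    ring_nf <;> (try simp only [Complex.I_sq]) <;> ring

theorem lie_T3 (x y : T3) : ⁅x, y⁆ = (⁅x.1, y.1⁆, ⁅x.2.1, y.2.1⁆, ⁅x.2.2, y.2.2⁆) := by
  rfl

/-- The bracket of two elements of `𝔭`, decomposed along `𝔤 = 𝔨 ⊕ 𝔭`. -/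
theorem brk_P (p q : (Fin 3 → ℝ) × (Fin 3 → ℝ)) :
    ⁅P p, P q⁆ = K (Kv p q) + P ((2 : ℝ) • Dv p q) := by
  rw [lie_T3]
  simp only [P, LinearMap.coe_mk, AddHom.coe_mk, K, S3_lie]
  ext <;> simp [S3, Kv, Dv, cross_apply] <;> ring

theorem brk_K (c : Fin 3 → ℝ) (q : (Fin 3 → ℝ) × (Fin 3 → ℝ)) :
    ⁅K c, P q⁆ = P (-(2 : ℝ) • crossProduct c q.1, -(2 : ℝ) • crossProduct c q.2) := by
  rw [lie_T3]
  simp only [P, LinearMap.coe_mk, AddHom.coe_mk, K, S3_lie]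
  ext <;> simp [S3, cross_apply] <;> ring

/-! ### The decomposition `𝔤 = 𝔨 ⊕ 𝔭` and the tensors in coordinates -/

theorem K_mem (c : Fin 3 → ℝ) : K c ∈ kAlg := by
  have h : K c = c 0 • ((Hm, Hm, Hm) : T3) + c 1 • ((Em, Em, Em) : T3)
      + c 2 • ((Fm, Fm, Fm) : T3) := by
    simp [K, S3]
  rw [h]
  refine add_mem (add_mem ?_ ?_) ?_ <;> refine Submodule.smul_mem _ _ (Submodule.subset_span ?_) <;>
    simp

theorem P_mem (p : (Fin 3 → ℝ) × (Fin 3 → ℝ)) : P p ∈ pAlg := by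
  have hs : Real.sqrt 12 ≠ 0 := by positivity
  have h : P p = (Real.sqrt 12 * p.1 0) • e1 + (Real.sqrt 12 * p.1 1) • e2
      + (Real.sqrt 12 * p.1 2) • e3
      + (2 * p.2 0) • e4 + (2 * p.2 1) • e5 + (2 * p.2 2) • e6 := by
    have h1 : ∀ (t : ℝ) (x : T3), (Real.sqrt 12 * t) • (Real.sqrt 12)⁻¹ • x = t • x := by
      intro t x
      rw [smul_smul]; congr 1; field_simp
    have h2 : ∀ (t : ℝ) (x : T3), (2 * t) • (2 : ℝ)⁻¹ • x = t • x := by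
      intro t x
      rw [smul_smul]; congr 1; field_simp
    simp only [e1, e2, e3, e4, e5, e6, h1, h2]
    ext <;> simp [P, S3] <;> ring
  rw [h]
  refine add_mem (add_mem (add_mem (add_mem (add_mem ?_ ?_) ?_) ?_) ?_) ?_ <;>
    refine Submodule.smul_mem _ _ (Submodule.subset_span ?_) <;> simp

theorem pAlg_le : pAlg ≤ LinearMap.range P := by
  unfold pAlg
  rw [Submodule.span_le]
  rintro x (rfl | rfl | rfl | rfl | rfl | rfl)
  · refine ⟨(Real.sqrt 12)⁻¹ • (![1, 0, 0], 0), ?_⟩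
    rw [map_smul, e1]; congr 1; ext <;> simp [P, S3]
  · refine ⟨(Real.sqrt 12)⁻¹ • (![0, 1, 0], 0), ?_⟩
    rw [map_smul, e2]; congr 1; ext <;> simp [P, S3]
  · refine ⟨(Real.sqrt 12)⁻¹ • (![0, 0, 1], 0), ?_⟩
    rw [map_smul, e3]; congr 1; ext <;> simp [P, S3]
  · refine ⟨(2 : ℝ)⁻¹ • (0, ![1, 0, 0]), ?_⟩
    rw [map_smul, e4]; congr 1; ext <;> simp [P, S3]
  · refine ⟨(2 : ℝ)⁻¹ • (0, ![0, 1, 0]), ?_⟩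
    rw [map_smul, e5]; congr 1; ext <;> simp [P, S3]
  · refine ⟨(2 : ℝ)⁻¹ • (0, ![0, 0, 1]), ?_⟩
    rw [map_smul, e6]; congr 1; ext <;> simp [P, S3]

theorem S3_inj {a : Fin 3 → ℝ} (h : S3 a = 0) : a = 0 := by
  have h0 := congrFun (congrFun h 0) 0
  have h1 := congrFun (congrFun h 1) 0
  simp [S3, Hm, Em, Fm, Complex.ext_iff] at h0 h1
  ext i
  fin_cases i <;> simp [h0, h1]

theorem P_inj : Function.Injective P := by
  rw [injective_iff_map_eq_zero]
  rintro ⟨a, b⟩ h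
  simp only [P, LinearMap.coe_mk, AddHom.coe_mk, Prod.ext_iff, Prod.fst_zero, Prod.snd_zero] at h
  have h1 := S3_inj h.1
  have h2 := S3_inj h.2.1
  have ha : a = 0 := by simpa using h2
  subst ha
  simp only [zero_add] at h1
  simp [h1]

theorem kAlg_diag {x : T3} (hx : x ∈ kAlg) : x.2.1 = x.1 ∧ x.2.2 = x.1 := by
  unfold kAlg at hx
  induction hx using Submodule.span_induction with
  | mem x h => rcases h with rfl | rfl | rfl <;> simp
  | zero => simp
  | add x y _ _ h1 h2 => simp [h1, h2]
  | smul c x _ h => simp [h]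

theorem pAlg_sum {x : T3} (hx : x ∈ pAlg) : x.1 + x.2.1 + x.2.2 = 0 := by
  obtain ⟨p, rfl⟩ := pAlg_le hx
  simp only [P, LinearMap.coe_mk, AddHom.coe_mk]
  ext <;> simp [S3] <;> ring

theorem disj {x : T3} (hk : x ∈ kAlg) (hp : x ∈ pAlg) : x = 0 := by
  obtain ⟨h1, h2⟩ := kAlg_diag hk
  have h3 := pAlg_sum hp
  rw [h1, h2] at h3
  have h4 : (3 : ℝ) • x.1 = 0 := by rw [← h3]; module
  have h5 : x.1 = 0 := by simpa using h4
  exact Prod.ext h5 (Prod.ext (h1.trans h5) (h2.trans h5))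

section Coordinates

variable {πk πp : T3 → T3}
  (hdec : ∀ Z ∈ gAlg, πk Z ∈ kAlg ∧ πp Z ∈ pAlg ∧ πk Z + πp Z = Z)

include hdec

/-- On `𝔤` the maps `πk` and `πp` are the projections of the direct sum. -/
theorem proj_eq_s8 {x y : T3} (hx : x ∈ kAlg) (hy : y ∈ pAlg) :
    πk (x + y) = x ∧ πp (x + y) = y := by
  obtain ⟨h1, h2, h3⟩ := hdec (x + y)
    (add_mem (Submodule.mem_sup_left hx) (Submodule.mem_sup_right hy))
  have h4 : πk (x + y) - x = y - πp (x + y) := by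
    rw [sub_eq_sub_iff_add_eq_add, h3, add_comm]
  have h5 : πk (x + y) - x = 0 :=
    disj (sub_mem h1 hx) (h4 ▸ sub_mem hy h2)
  exact ⟨sub_eq_zero.1 h5, (sub_eq_zero.1 (h4.symm.trans h5)).symm⟩

theorem Dmap_P (p q : (Fin 3 → ℝ) × (Fin 3 → ℝ)) : Dmap πp (P p) (P q) = P (Dv p q) := by
  rw [Dmap, brk_P, (proj_eq_s8 hdec (K_mem _) (P_mem _)).2, map_smul, smul_smul]
  norm_num

theorem Rmap_P (p q r : (Fin 3 → ℝ) × (Fin 3 → ℝ)) :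
    Rmap πk πp (P p) (P q) (P r) = P (Rv p q r) := by
  have h := proj_eq_s8 hdec (K_mem (Kv p q)) (P_mem ((2 : ℝ) • Dv p q))
  rw [Rmap, brk_P p q, h.1, h.2, brk_K]
  simp only [Dmap_P hdec, Rv, map_sub]

theorem nablaR_P (s p q r : (Fin 3 → ℝ) × (Fin 3 → ℝ)) :
    nablaR πk πp (P s) (P p) (P q) (P r) = P (Nv s p q r) := by
  simp only [nablaR, Dmap_P hdec, Rmap_P hdec, Nv, map_sub]

end Coordinates

/-! ### Four-dimensional invariant subspaces of `ℝ³ × ℝ³` -/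

section Invariant

variable {w : Submodule ℝ ((Fin 3 → ℝ) × (Fin 3 → ℝ))}
  (hR : ∀ X ∈ w, ∀ Y ∈ w, ∀ Z ∈ w, Rv X Y Z ∈ w)
  (hN : ∀ V ∈ w, ∀ X ∈ w, ∀ Y ∈ w, ∀ Z ∈ w, Nv V X Y Z ∈ w)

theorem dot_pos {u : Fin 3 → ℝ} (hu : u ≠ 0) : 0 < u ⬝ᵥ u := by
  have h : 0 ≤ u ⬝ᵥ u := by
    rw [dotProduct]; exact Finset.sum_nonneg fun i _ => mul_self_nonneg _
  exact lt_of_le_of_ne h fun h0 => hu (dotProduct_self_eq_zero.1 h0.symm)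

/-- The Jacobi operator of `(0, u)`. -/
theorem jacobi (u a b : Fin 3 → ℝ) :
    Rv (a, b) (0, u) (0, u) =
      ((1 / 3 : ℝ) • ((u ⬝ᵥ u) • a - (u ⬝ᵥ a) • u),
        (3 : ℝ) • ((u ⬝ᵥ u) • b - (u ⬝ᵥ b) • u)) := by
  ext i <;> fin_cases i <;>
    simp [Rv, Dv, Kv, cross_apply, dotProduct, Fin.sum_univ_three] <;> ring

/-- The operator `Y ↦ (∇_X R)(Y, X, X)` for `X = (0, u)`. -/
theorem nabla (u a b : Fin 3 → ℝ) :
    Nv (0, u) (a, b) (0, u) (0, u) =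
      (-(8 / 9 : ℝ) • (u ⬝ᵥ u) • crossProduct u b,
        (8 / 3 : ℝ) • (u ⬝ᵥ u) • crossProduct u a) := by
  ext i <;> fin_cases i <;>
    simp [Nv, Rv, Dv, Kv, cross_apply, dotProduct, Fin.sum_univ_three] <;> ring

/-- A mixed curvature term, sending the summand `0 × u^⊥` to `u^⊥ × 0` once `(u, 0) ∈ w`. -/
theorem mixed (u y : Fin 3 → ℝ) :
    Rv (0, y) (u, 0) (0, u) = ((u ⬝ᵥ u) • y - (u ⬝ᵥ y) • u, 0) := by
  ext i <;> fin_cases i <;>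
    simp [Rv, Dv, Kv, cross_apply, dotProduct, Fin.sum_univ_three] <;> ring

include hR in
/-- Splitting of an element of `w` along the eigenspaces of the Jacobi operator of `(0, u)`. -/
theorem split {u a b : Fin 3 → ℝ} (hu : u ≠ 0) (hX : (0, u) ∈ w) (hY : (a, b) ∈ w) :
    ((u ⬝ᵥ u) • a - (u ⬝ᵥ a) • u, 0) ∈ w ∧ (0, (u ⬝ᵥ u) • b - (u ⬝ᵥ b) • u) ∈ w := by
  have hn := dot_pos hu
  have h1 := hR _ hY _ hX _ hX
  have h2 := hR _ h1 _ hX _ hX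
  rw [jacobi] at h1 h2
  rw [jacobi] at h2
  have e : ∀ (x : Fin 3 → ℝ), (u ⬝ᵥ u) • ((u ⬝ᵥ u) • x - (u ⬝ᵥ x) • u)
      - (u ⬝ᵥ ((u ⬝ᵥ u) • x - (u ⬝ᵥ x) • u)) • u
      = (u ⬝ᵥ u) • ((u ⬝ᵥ u) • x - (u ⬝ᵥ x) • u) := by
    intro x
    simp only [dotProduct_sub, dotProduct_smul, smul_eq_mul]
    rw [show (u ⬝ᵥ u) * (u ⬝ᵥ x) - (u ⬝ᵥ x) * (u ⬝ᵥ u) = 0 by ring, zero_smul, sub_zero]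
  simp only [dotProduct_smul, smul_eq_mul, mul_smul,
    smul_comm (u ⬝ᵥ u) (1 / 3 : ℝ), smul_comm (u ⬝ᵥ u) (3 : ℝ), ← smul_sub, e] at h2
  have hn0 := hn.ne.symm
  -- Remove the eigenvalue `3|u|²` (resp. `|u|²/3`) component and rescale.
  constructor
  · have h := w.smul_mem (9 / 8 * (u ⬝ᵥ u)⁻¹)
      (sub_mem (w.smul_mem (3 * (u ⬝ᵥ u)) h1) h2)
    convert h using 1
    ext i
    · simp; field_simp; ring
    · simp; right; ring
  · have h := w.smul_mem (1 / 8 * (u ⬝ᵥ u)⁻¹)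
      (sub_mem h2 (w.smul_mem (1 / 3 * (u ⬝ᵥ u)) h1))
    convert h using 1
    ext i
    · simp; right; ring
    · simp; field_simp; ring

include hN in
theorem swap_fst {u y : Fin 3 → ℝ} (hu : u ≠ 0) (hX : (0, u) ∈ w) (hY : (y, 0) ∈ w) :
    (0, crossProduct u y) ∈ w := by
  have hn := (dot_pos hu).ne'
  have h1 := hN _ hX _ hY _ hX _ hX
  rw [nabla] at h1
  have h := w.smul_mem (3 / 8 * (u ⬝ᵥ u)⁻¹) h1
  convert h using 1
  ext i
  · simp
  · simp; field_simp

include hN in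
theorem swap_snd {u y : Fin 3 → ℝ} (hu : u ≠ 0) (hX : (0, u) ∈ w) (hY : (0, y) ∈ w) :
    (crossProduct u y, 0) ∈ w := by
  have hn := (dot_pos hu).ne'
  have h1 := hN _ hX _ hY _ hX _ hX
  rw [nabla] at h1
  have h := w.smul_mem (-(9 / 8) * (u ⬝ᵥ u)⁻¹) h1
  convert h using 1
  ext i
  · simp; field_simp
  · simp

theorem cross_cross_self {u y : Fin 3 → ℝ} (huy : u ⬝ᵥ y = 0) :
    crossProduct u (crossProduct u y) = -(u ⬝ᵥ u) • y := by
  have h : crossProduct u (crossProduct u y) = (u ⬝ᵥ y) • u - (u ⬝ᵥ u) • y := by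
    ext i
    fin_cases i <;> simp [cross_apply, dotProduct, Fin.sum_univ_three] <;> ring
  rw [h, huy]
  simp

/-- Expansion of a vector in the orthogonal frame `u, y, u × y`. -/
theorem frame {u y : Fin 3 → ℝ} (huy : u ⬝ᵥ y = 0) (x : Fin 3 → ℝ) :
    ((u ⬝ᵥ u) * (y ⬝ᵥ y)) • x = ((y ⬝ᵥ y) * (u ⬝ᵥ x)) • u + ((u ⬝ᵥ u) * (y ⬝ᵥ x)) • y
      + (crossProduct u y ⬝ᵥ x) • crossProduct u y := by
  ext i
  have hs := huy
  simp only [dotProduct, Fin.sum_univ_three] at hs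
  -- The coefficients come from the Gram identity for a frame with `u · y` arbitrary.
  have coef : ∀ j : Fin 3, ((u 0 * y 0 + u 1 * y 1 + u 2 * y 2) * x j
      - (y 0 * x 0 + y 1 * x 1 + y 2 * x 2) * u j
      - (u 0 * x 0 + u 1 * x 1 + u 2 * x 2) * y j)
      * (u 0 * y 0 + u 1 * y 1 + u 2 * y 2) = 0 := by
    intro j
    rw [hs, mul_zero]
  fin_cases i <;> simp [cross_apply, dotProduct, Fin.sum_univ_three]
  · linear_combination coef 0
  · linear_combination coef 1
  · linear_combination coef 2

/-- Division of `frame` by the square norms. -/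
theorem frame_div {u y : Fin 3 → ℝ} (hu : u ≠ 0) (hy : y ≠ 0) (huy : u ⬝ᵥ y = 0)
    (x : Fin 3 → ℝ) : ∃ α β γ : ℝ, x = α • u + β • y + γ • crossProduct u y := by
  have h := frame huy x
  have hn := (dot_pos hu).ne'
  have hm := (dot_pos hy).ne'
  refine ⟨((u ⬝ᵥ u) * (y ⬝ᵥ y))⁻¹ * ((y ⬝ᵥ y) * (u ⬝ᵥ x)),
    ((u ⬝ᵥ u) * (y ⬝ᵥ y))⁻¹ * ((u ⬝ᵥ u) * (y ⬝ᵥ x)),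
    ((u ⬝ᵥ u) * (y ⬝ᵥ y))⁻¹ * (crossProduct u y ⬝ᵥ x), ?_⟩
  rw [mul_smul _ ((y ⬝ᵥ y) * _), mul_smul _ ((u ⬝ᵥ u) * _), mul_smul _ (crossProduct u y ⬝ᵥ x),
    ← smul_add, ← smul_add, ← h, smul_smul, inv_mul_cancel₀ (mul_ne_zero hn hm), one_smul]

theorem exists_snd (hw : Module.finrank ℝ w = 4) : ∃ u : Fin 3 → ℝ, u ≠ 0 ∧ (0, u) ∈ w := by
  have h : LinearMap.ker ((LinearMap.fst ℝ (Fin 3 → ℝ) (Fin 3 → ℝ)).comp w.subtype) ≠ ⊥ := by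
    apply LinearMap.ker_ne_bot_of_finrank_lt
    simp [hw]
  obtain ⟨⟨⟨a, u⟩, hx⟩, hk, h0⟩ := Submodule.exists_mem_ne_zero_of_ne_bot h
  have ha : a = 0 := by simpa using hk
  subst ha
  refine ⟨u, ?_, hx⟩
  rintro rfl
  exact h0 rfl

include hR hN in
/-- The second and third summands of `w` are nonzero. -/
theorem exists_perp (hw : Module.finrank ℝ w = 4) {u : Fin 3 → ℝ} (hu : u ≠ 0)
    (hX : (0, u) ∈ w) : ∃ y : Fin 3 → ℝ, y ≠ 0 ∧ u ⬝ᵥ y = 0 ∧ (y, 0) ∈ w := by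
  by_contra! hcon
  have hn := (dot_pos hu).ne'
  have perp : ∀ x : Fin 3 → ℝ, u ⬝ᵥ ((u ⬝ᵥ u) • x - (u ⬝ᵥ x) • u) = 0 := by
    intro x
    simp only [dotProduct_sub, dotProduct_smul, smul_eq_mul]; ring
  have key : ∀ x : Fin 3 → ℝ, (u ⬝ᵥ u) • x - (u ⬝ᵥ x) • u = 0 →
      x = ((u ⬝ᵥ u)⁻¹ * (u ⬝ᵥ x)) • u := by
    intro x hx
    rw [mul_smul, ← sub_eq_zero.1 hx, smul_smul, inv_mul_cancel₀ hn, one_smul]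
  let f : (ℝ × ℝ) →ₗ[ℝ] ((Fin 3 → ℝ) × (Fin 3 → ℝ)) :=
    LinearMap.prodMap (LinearMap.toSpanSingleton ℝ _ u) (LinearMap.toSpanSingleton ℝ _ u)
  have hle : w ≤ LinearMap.range f := by
    rintro ⟨a, b⟩ hab
    obtain ⟨h1, h2⟩ := split hR hu hX hab
    have ha : (u ⬝ᵥ u) • a - (u ⬝ᵥ a) • u = 0 := by
      by_contra h
      exact hcon _ h (perp a) h1
    have hb : (u ⬝ᵥ u) • b - (u ⬝ᵥ b) • u = 0 := by
      by_contra h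
      have h3 := swap_snd hN hu hX h2
      refine hcon _ ?_ (dot_self_cross _ _) h3
      intro h4
      have h5 := cross_cross_self (perp b)
      rw [h4] at h5
      simp only [map_zero, neg_smul] at h5
      exact h ((smul_eq_zero.1 (neg_eq_zero.1 h5.symm)).resolve_left hn)
    refine ⟨((u ⬝ᵥ u)⁻¹ * (u ⬝ᵥ a), (u ⬝ᵥ u)⁻¹ * (u ⬝ᵥ b)), ?_⟩
    exact Prod.ext (key a ha).symm (key b hb).symm
  have h1 := Submodule.finrank_mono hle
  have h2 := LinearMap.finrank_range_le f
  simp at h2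
  omega

include hN in
/-- The second and third summands of `w` are not both all of `u^⊥`. -/
theorem not_both (hw : Module.finrank ℝ w = 4) {u y : Fin 3 → ℝ} (hu : u ≠ 0) (hy : y ≠ 0)
    (huy : u ⬝ᵥ y = 0) (hX : (0, u) ∈ w) (hY : (y, 0) ∈ w) : (crossProduct u y, 0) ∉ w := by
  intro hZ
  have hn := (dot_pos hu).ne'
  have hY2 := swap_fst hN hu hX hY
  have hZ2 : (0, y) ∈ w := by
    have h := w.smul_mem (-(u ⬝ᵥ u)⁻¹) (swap_fst hN hu hX hZ)
    rw [cross_cross_self huy] at h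
    convert h using 1
    ext i
    · simp
    · simp; field_simp
  let g : ((Fin 3 → ℝ) × (Fin 3 → ℝ)) →ₗ[ℝ] ℝ :=
    (dotProductBilin ℝ ℝ u).comp (LinearMap.fst ℝ (Fin 3 → ℝ) (Fin 3 → ℝ))
  have hle : LinearMap.ker g ≤ w := by
    rintro ⟨a, b⟩ hab
    have ha : u ⬝ᵥ a = 0 := by simpa [g] using hab
    obtain ⟨α, β, γ, rfl⟩ := frame_div hu hy huy a
    obtain ⟨α', β', γ', rfl⟩ := frame_div hu hy huy b
    have hα : α = 0 := by
      simpa [dotProduct_add, dotProduct_smul, huy, dot_self_cross, hu] using ha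
    subst hα
    have h := add_mem (add_mem (w.smul_mem β hY) (w.smul_mem γ hZ))
      (add_mem (add_mem (w.smul_mem α' hX) (w.smul_mem β' hZ2)) (w.smul_mem γ' hY2))
    convert h using 1
    ext i <;> simp
  have h1 := Submodule.finrank_mono hle
  have h2 := LinearMap.finrank_range_add_finrank_ker g
  have h3 := Submodule.finrank_le (LinearMap.range g)
  simp at h2 h3
  omega

include hR hN in
/-- The first summand of `w` is all of `{(su, tu)}`. -/
theorem fst_mem (hw : Module.finrank ℝ w = 4) {u y : Fin 3 → ℝ} (hu : u ≠ 0) (hy : y ≠ 0)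
    (huy : u ⬝ᵥ y = 0) (hX : (0, u) ∈ w) (hY : (y, 0) ∈ w) : (u, 0) ∈ w := by
  by_contra hcon
  have hn := (dot_pos hu).ne'
  have hnot := not_both hN hw hu hy huy hX hY
  have hY2 := swap_fst hN hu hX hY
  let f : (ℝ × (ℝ × ℝ)) →ₗ[ℝ] ((Fin 3 → ℝ) × (Fin 3 → ℝ)) :=
    LinearMap.prodMap (LinearMap.toSpanSingleton ℝ _ y)
      ((LinearMap.toSpanSingleton ℝ _ u).coprod
        (LinearMap.toSpanSingleton ℝ _ (crossProduct u y)))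
  have hle : w ≤ LinearMap.range f := by
    rintro ⟨a, b⟩ hab
    obtain ⟨α, β, γ, rfl⟩ := frame_div hu hy huy a
    obtain ⟨α', β', γ', rfl⟩ := frame_div hu hy huy b
    have h1 := split hR hu hX hab
    have e : ∀ α β γ : ℝ, (u ⬝ᵥ u) • (α • u + β • y + γ • crossProduct u y)
        - (u ⬝ᵥ (α • u + β • y + γ • crossProduct u y)) • u
        = (u ⬝ᵥ u) • (β • y + γ • crossProduct u y) := by
      intro α β γ
      simp only [dotProduct_add, dotProduct_smul, huy, dot_self_cross, smul_eq_mul]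
      module
    rw [e, e] at h1
    obtain ⟨h1, h2⟩ := h1
    have hγ : γ = 0 := by
      by_contra hγ
      apply hnot
      have h := w.smul_mem γ⁻¹ (sub_mem (w.smul_mem (u ⬝ᵥ u)⁻¹ h1) (w.smul_mem β hY))
      convert h using 1
      ext i
      · simp; field_simp; ring
      · simp
    have hβ : β' = 0 := by
      by_contra hβ
      apply hnot
      apply swap_snd hN hu hX
      have h := w.smul_mem β'⁻¹ (sub_mem (w.smul_mem (u ⬝ᵥ u)⁻¹ h2) (w.smul_mem γ' hY2))
      convert h using 1
      ext i
      · simp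
      · simp; field_simp; ring
    subst hγ hβ
    have hα : α = 0 := by
      by_contra hα
      apply hcon
      have h := w.smul_mem α⁻¹ (sub_mem (sub_mem (sub_mem hab (w.smul_mem β hY))
        (w.smul_mem α' hX)) (w.smul_mem γ' hY2))
      convert h using 1
      ext i
      · simp; field_simp
      · simp
    subst hα
    refine ⟨(β, α', γ'), ?_⟩
    ext i <;> simp [f]
  have h1 := Submodule.finrank_mono hle
  have h2 := LinearMap.finrank_range_le f
  simp at h2
  omega

include hR hN in
theorem no_invariant (hw : Module.finrank ℝ w = 4) : False := by
  obtain ⟨u, hu, hX⟩ := exists_snd hw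
  obtain ⟨y, hy, huy, hY⟩ := exists_perp hR hN hw hu hX
  have hU := fst_mem hR hN hw hu hy huy hX hY
  apply not_both hN hw hu hy huy hX hY
  have hn := (dot_pos hu).ne'
  have h := hR _ (swap_fst hN hu hX hY) _ hU _ hX
  rw [mixed, dot_self_cross, zero_smul, sub_zero] at h
  have h' := w.smul_mem (u ⬝ᵥ u)⁻¹ h
  convert h' using 1
  ext i
  · simp; field_simp
  · simp

end Invariant

/-- There is no 4-dimensional subspace of `𝔭` invariant under
`R` and `∇R`: nearly Kähler `S³×S³` has no codimension-two totally geodesic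
submanifolds. -/
theorem no_four_dimensional_invariant_subspace_S3S3
    (πk πp : T3 → T3)
    (hdec : ∀ Z ∈ gAlg, πk Z ∈ kAlg ∧ πp Z ∈ pAlg ∧ πk Z + πp Z = Z) :
    ¬ ∃ v : Submodule ℝ T3, Module.finrank ℝ v = 4 ∧ v ≤ pAlg ∧
      (∀ X ∈ v, ∀ Y ∈ v, ∀ Z ∈ v, Rmap πk πp X Y Z ∈ v) ∧
      (∀ V ∈ v, ∀ X ∈ v, ∀ Y ∈ v, ∀ Z ∈ v, nablaR πk πp V X Y Z ∈ v) := by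
  rintro ⟨v, hv, hle, hR, hN⟩
  refine no_invariant (w := v.comap P) ?_ ?_ ?_
  · intro X hX Y hY Z hZ
    rw [Submodule.mem_comap, ← Rmap_P hdec]
    exact hR _ hX _ hY _ hZ
  · intro V hV X hX Y hY Z hZ
    rw [Submodule.mem_comap, ← nablaR_P hdec]
    exact hN _ hV _ hX _ hY _ hZ
  · rw [(Submodule.equivMapOfInjective P P_inj (v.comap P)).finrank_eq,
      Submodule.map_comap_eq_of_le (hle.trans pAlg_le), hv]

end
end

section
/- Let 𝔳 ⊆ 𝔭 be a 3-dimensional subspace such that R(X,Y)Z ∈ 𝔳 and (∇_V R)(X,Y,Z) ∈ 𝔳 for all X, Y, Z, V ∈ 𝔳. Then there exists a real Lie algebra automorphism φ of 𝔤 with φ(𝔨) = 𝔨, φ(𝔭) = 𝔭 and ⟨φ(X), φ(Y)⟩ = ⟨X, Y⟩ for all X, Y, such that either φ(𝔳) = 𝔭₁ or φ(𝔳) = span{e₁, e₅, e₆}. (Algebraic core of: every complete 3-dimensional totally geodesic submanifold of nearly Kähler S³×S³ is congruent either to the round-sphere fiber S³(2/√3) or to the Berger sphere S³_{ℂ,1/3}(2).)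 -/
/-!
Identify `𝔭` with `ℂ³ = ℝ³ ⊗ ℝ²` by `iot`. Then `D x y = conj (x ×₃ y) / √12`, and `R` is a
polynomial expression in the metric, the complex structure, the complex bilinear form `bil` and
complex conjugation (`modelR_eq`). The form of `R` is unchanged by multiplication by unit complex
scalars; only `∇R` sees the conjugation in `D` and breaks this circle symmetry. Let `W ⊆ ℂ³` be
invariant under `R` and `∇R`, with `dim W = 3`.

* `W` is Lagrangian (`lagrangian_of_invariant`): the Kähler form restricted to `W` has a null
  vector because `dim W` is odd, and `R`-invariance then forces the whole restriction to vanish.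
* On the Lagrangian `W`, the real and imaginary parts of `bil` are proportional
  (`bil_proportional`), so some `μ⁻¹ W` with `|μ| = 1` is stable under complex conjugation. Hence
  `W = μ ℝ³` or `W = μ (ℝ n ⊕ i n^⊥)` for a unit vector `n` (`invariant_normal_form`).
* `∇R`-invariance forces `μ ^ 6 = 1`, and since `W = -W` one may take `μ ^ 3 = 1`
  (`herm_modelN`, `exists_frame_cube`).
* Multiplication by a cube root of unity is induced by a cyclic permutation of the three factors,
  and a half-turn of `ℝ³` taking the first basis vector to `n` is induced by conjugation in every
  factor by a unit element of `𝔰𝔲(2)`. Both are isometric automorphisms preserving `𝔨` and `𝔭`;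
  their composite carries `W` to one of the two standard subspaces.
-/

/- Setup: the homogeneous nearly Kähler S³×S³ = SU(2)³/ΔSU(2). -/

noncomputable section
open Matrix

/-- the real-valued inner product
`⟨(X₁,X₂,X₃),(Y₁,Y₂,Y₃)⟩ = −tr(X₁Y₁) − tr(X₂Y₂) − tr(X₃Y₃)` on `𝔤`. -/
def iprod (X Y : T3) : ℝ :=
  -(((X.1 * Y.1).trace + (X.2.1 * Y.2.1).trace + (X.2.2 * Y.2.2).trace).re)

/-! ### The algebraic model on `ℂ³` -/

/-- The complex bilinear form `∑ xᵢ yᵢ`. -/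
def bil (x y : Fin 3 → ℂ) : ℂ := x ⬝ᵥ y

/-- The Hermitian form `∑ x̄ᵢ yᵢ`; its real part is the metric, its imaginary part the Kähler
form `ω(x, y) = ⟨ix, y⟩`. -/
def herm (x y : Fin 3 → ℂ) : ℂ := star x ⬝ᵥ y

/-- The difference tensor in the model: `D_x y = (1/√12) · conj (x × y)`. -/
def modelD (x y : Fin 3 → ℂ) : Fin 3 → ℂ := (Real.sqrt 12)⁻¹ • star (x ⨯₃ y)

/-- The action `z ↦ [[x, y]_𝔨, z]` of the isotropy algebra in the model. -/
def modelK (x y z : Fin 3 → ℂ) : Fin 3 → ℂ :=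
  (3 : ℝ)⁻¹ • ((star x ⨯₃ y + x ⨯₃ star y) ⨯₃ z)

/-- The curvature tensor in the model; `2 • modelD x y` is `[x, y]_𝔭`. -/
def modelR (x y z : Fin 3 → ℂ) : Fin 3 → ℂ :=
  modelD x (modelD y z) - modelD y (modelD x z) - modelK x y z
    - modelD ((2 : ℝ) • modelD x y) z

/-- The covariant derivative of the curvature tensor in the model. -/
def modelN (v x y z : Fin 3 → ℂ) : Fin 3 → ℂ :=
  modelD v (modelR x y z) - modelR (modelD v x) y z - modelR x (modelD v y) z
    - modelR x y (modelD v z)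

lemma inv_sqrt_twelve_sq : (Real.sqrt 12)⁻¹ * (Real.sqrt 12)⁻¹ = 1 / 12 := by
  rw [← mul_inv, Real.mul_self_sqrt (by norm_num)]; norm_num

lemma modelD_modelD (x y z : Fin 3 → ℂ) :
    modelD x (modelD y z) = (1 / 12 : ℝ) • (star x ⨯₃ (y ⨯₃ z)) := by
  rw [← inv_sqrt_twelve_sq]
  unfold modelD
  ext i
  fin_cases i <;> simp [cross_apply] <;> ring

lemma modelD_two_modelD (x y z : Fin 3 → ℂ) :
    modelD ((2 : ℝ) • modelD x y) z = (1 / 12 : ℝ) • ((2 : ℝ) • ((x ⨯₃ y) ⨯₃ star z)) := by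
  rw [← inv_sqrt_twelve_sq]
  unfold modelD
  ext i
  fin_cases i <;> simp [cross_apply] <;> ring

/-- The curvature written with the metric, the complex structure and the real structure of `ℂ³`.
Only the combination of the forms displayed here matters, and it is invariant under the circle of
scalars of modulus one. -/
lemma modelR_eq (x y z : Fin 3 → ℂ) :
    (12 : ℝ) • modelR x y z =
      (5 * (herm y z).re) • x - (5 * (herm x z).re) • y
      + ((herm y z).im • Complex.I • x - (herm x z).im • Complex.I • y
        - (2 * (herm x y).im) • Complex.I • z
        + (4 : ℝ) • (bil y z • star x - bil x z • star y)) := by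
  rw [modelR, modelD_modelD, modelD_modelD, modelD_two_modelD]
  ext i
  fin_cases i <;>
  · simp only [modelK, cross_apply, herm, bil, dotProduct, Fin.sum_univ_three]
    apply Complex.ext <;> simp <;> ring

/-! ### Curvature-invariant three-dimensional subspaces are Lagrangian -/

lemma herm_im_eq (x y : Fin 3 → ℂ) : (herm x y).im =
    ((x 0).re * (y 0).im - (x 0).im * (y 0).re) + ((x 1).re * (y 1).im - (x 1).im * (y 1).re)
      + ((x 2).re * (y 2).im - (x 2).im * (y 2).re) := by
  simp [herm, dotProduct, Fin.sum_univ_three]; ring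

lemma herm_self_re_eq (x : Fin 3 → ℂ) : (herm x x).re =
    ((x 0).re ^ 2 + (x 0).im ^ 2) + ((x 1).re ^ 2 + (x 1).im ^ 2)
      + ((x 2).re ^ 2 + (x 2).im ^ 2) := by
  simp [herm, dotProduct, Fin.sum_univ_three]; ring

lemma herm_im_swap (x y : Fin 3 → ℂ) : (herm x y).im = -(herm y x).im := by
  rw [herm_im_eq, herm_im_eq]; ring

lemma herm_im_self (x : Fin 3 → ℂ) : (herm x x).im = 0 := by
  rw [herm_im_eq]; ring

lemma herm_im_add_left (x y z : Fin 3 → ℂ) :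
    (herm (x + y) z).im = (herm x z).im + (herm y z).im := by
  simp [herm_im_eq]; ring

lemma herm_im_sub_left (x y z : Fin 3 → ℂ) :
    (herm (x - y) z).im = (herm x z).im - (herm y z).im := by
  simp [herm_im_eq]; ring

lemma herm_im_smul_left (r : ℝ) (x z : Fin 3 → ℂ) :
    (herm (r • x) z).im = r * (herm x z).im := by
  simp [herm_im_eq]; ring

lemma herm_im_conj_left (β : ℂ) (x z : Fin 3 → ℂ) :
    (herm (β • star x) z).im = ((starRingEnd ℂ) β * bil x z).im := by
  simp [herm_im_eq, bil, dotProduct, Fin.sum_univ_three]; ring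

lemma herm_im_I_left (x z : Fin 3 → ℂ) :
    (herm (Complex.I • x) z).im = -(herm x z).re := by
  simp [herm, dotProduct, Fin.sum_univ_three]; ring

lemma bil_comm (x y : Fin 3 → ℂ) : bil x y = bil y x := dotProduct_comm x y

lemma eq_zero_of_herm_self {x : Fin 3 → ℂ} (h : (herm x x).re = 0) : x = 0 := by
  rw [herm_self_re_eq] at h
  ext i
  fin_cases i <;> apply Complex.ext <;> simp <;> nlinarith [sq_nonneg (x 0).re,
    sq_nonneg (x 0).im, sq_nonneg (x 1).re, sq_nonneg (x 1).im, sq_nonneg (x 2).re,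
    sq_nonneg (x 2).im]

/-- Modulo an invariant subspace, only the part of the curvature coming from the complex and the
real structure of `ℂ³` matters. -/
lemma curvature_mem {W : Submodule ℝ (Fin 3 → ℂ)}
    (hR : ∀ x ∈ W, ∀ y ∈ W, ∀ z ∈ W, modelR x y z ∈ W)
    {x y z : Fin 3 → ℂ} (hx : x ∈ W) (hy : y ∈ W) (hz : z ∈ W) :
    (herm y z).im • Complex.I • x - (herm x z).im • Complex.I • y
        - (2 * (herm x y).im) • Complex.I • z
        + (4 : ℝ) • (bil y z • star x - bil x z • star y) ∈ W := by
  have h := W.smul_mem (12 : ℝ) (hR x hx y hy z hz)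
  rw [modelR_eq] at h
  exact (W.add_mem_iff_right
    (W.sub_mem (W.smul_mem _ hx) (W.smul_mem _ hy))).1 h

/-- In odd dimension the skew form `ω` is degenerate; the null vector is written down explicitly
in a basis. -/
lemma exists_null_vector {W : Submodule ℝ (Fin 3 → ℂ)} (hdim : Module.finrank ℝ W = 3)
    {x y : Fin 3 → ℂ} (hx : x ∈ W) (hy : y ∈ W) (hxy : (herm x y).im ≠ 0) :
    ∃ n ∈ W, n ≠ 0 ∧ ∀ w ∈ W, (herm n w).im = 0 := by
  let b := Module.finBasisOfFinrankEq ℝ W hdim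
  have hb : ∀ w ∈ W, ∃ c : Fin 3 → ℝ,
      w = c 0 • (b 0 : Fin 3 → ℂ) + c 1 • (b 1 : Fin 3 → ℂ) + c 2 • (b 2 : Fin 3 → ℂ) := by
    intro w hw
    refine ⟨fun i => b.repr ⟨w, hw⟩ i, ?_⟩
    have h := congrArg Subtype.val (b.sum_repr ⟨w, hw⟩)
    rw [Fin.sum_univ_three] at h
    simpa using h.symm
  have hsw : ∀ i, (herm (b i : Fin 3 → ℂ) (b i)).im = 0 := fun i => herm_im_self _
  have hr : ∀ (r : ℝ) (u w : Fin 3 → ℂ), (herm u (r • w)).im = r * (herm u w).im := by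
    intro r u w
    rw [herm_im_swap, herm_im_smul_left, herm_im_swap w u]; ring
  have ha : ∀ (u w z : Fin 3 → ℂ), (herm u (w + z)).im = (herm u w).im + (herm u z).im := by
    intro u w z
    rw [herm_im_swap, herm_im_add_left, herm_im_swap w u, herm_im_swap z u]; ring
  have h10 := herm_im_swap (b 1 : Fin 3 → ℂ) (b 0)
  have h20 := herm_im_swap (b 2 : Fin 3 → ℂ) (b 0)
  have h21 := herm_im_swap (b 2 : Fin 3 → ℂ) (b 1)
  set p := (herm (b 0 : Fin 3 → ℂ) (b 1)).im with hp
  set q := (herm (b 0 : Fin 3 → ℂ) (b 2)).im with hq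
  set r := (herm (b 1 : Fin 3 → ℂ) (b 2)).im with hr'
  refine ⟨((r • b 0 - q • b 1 + p • b 2 : W) : Fin 3 → ℂ), Subtype.property _, ?_, ?_⟩
  · intro h0
    have h0' : (r • b 0 - q • b 1 + p • b 2 : W) = 0 := Subtype.ext h0
    have hc := fun i => congrArg (fun w => b.repr w i) h0'
    have hr0 : r = 0 := by simpa [Finsupp.single_apply] using hc 0
    have hq0 : q = 0 := by simpa [Finsupp.single_apply] using hc 1
    have hp0 : p = 0 := by simpa [Finsupp.single_apply] using hc 2
    obtain ⟨c, rfl⟩ := hb x hx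
    obtain ⟨d, rfl⟩ := hb y hy
    apply hxy
    simp only [herm_im_add_left, herm_im_smul_left, ha, hr, hsw, h10, h20, h21, ← hp, ← hq,
      ← hr', hr0, hq0, hp0]
    ring
  · intro w hw
    obtain ⟨c, rfl⟩ := hb w hw
    simp only [Submodule.coe_add, Submodule.coe_sub, Submodule.coe_smul, herm_im_add_left,
      herm_im_sub_left, herm_im_smul_left, ha, hr, hsw, h10, h20, h21, ← hp, ← hq, ← hr']
    ring

/-- If `ω` did not vanish on `W`, its null vector `n` would be isotropic for the bilinear form and
`W` would contain `n̄` and `i n̄`; the curvature of the complex line through `n̄` applied to `n` then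
puts `i n` into `W`, which contradicts that `n` is a null vector of `ω`. -/
lemma lagrangian_of_invariant {W : Submodule ℝ (Fin 3 → ℂ)} (hdim : Module.finrank ℝ W = 3)
    (hR : ∀ x ∈ W, ∀ y ∈ W, ∀ z ∈ W, modelR x y z ∈ W) :
    ∀ x ∈ W, ∀ y ∈ W, (herm x y).im = 0 := by
  intro x hx y hy
  by_contra hxy
  obtain ⟨n, hn, hn0, hnull⟩ := exists_null_vector hdim hx hy hxy
  have hnull' : ∀ w ∈ W, (herm w n).im = 0 := fun w hw => by
    rw [herm_im_swap, hnull w hw, neg_zero]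
  have hnn : (herm n n).re ≠ 0 := fun h => hn0 (eq_zero_of_herm_self h)
  have h1 : ∀ w ∈ W, bil w n • star n - bil n n • star w ∈ W := by
    intro w hw
    have h := curvature_mem hR hn hw hn
    rw [hnull' w hw, hnull w hw, hnull n hn] at h
    have h' := W.smul_mem (4 : ℝ)⁻¹ h
    simpa using h'
  have h2 : ((starRingEnd ℂ) (bil y n) * bil x n).im ≠ 0 := by
    have h := hnull' _ (curvature_mem hR hx hy hn)
    rw [hnull' x hx, hnull' y hy] at h
    simp only [herm_im_add_left, herm_im_sub_left, herm_im_smul_left, herm_im_conj_left,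
      herm_im_I_left] at h
    intro h0
    have h0' : ((starRingEnd ℂ) (bil x n) * bil y n).im = 0 := by
      have e : ((starRingEnd ℂ) (bil x n) * bil y n).im
        = -((starRingEnd ℂ) (bil y n) * bil x n).im := by simp; ring
      rw [e, h0, neg_zero]
    rw [h0, h0'] at h
    apply hxy
    have : (herm x y).im * (herm n n).re = 0 := by linarith
    exact (mul_eq_zero.1 this).resolve_right hnn
  have h3 : ∀ w ∈ W, ((starRingEnd ℂ) (bil n n) * bil w n).im = 0 := by
    intro w hw
    have h := hnull' _ (h1 w hw)
    simp only [herm_im_sub_left, herm_im_conj_left] at h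
    have e : ((starRingEnd ℂ) (bil w n) * bil n n).im
        = -((starRingEnd ℂ) (bil n n) * bil w n).im := by simp; ring
    linarith
  have hβ : bil n n = 0 := by
    have hx3 := h3 x hx
    have hy3 := h3 y hy
    simp only [Complex.mul_im, Complex.conj_re, Complex.conj_im] at hx3 hy3 h2
    -- two real-independent complex numbers cannot both be real multiples of a nonzero one
    apply Complex.ext
    · refine (mul_eq_zero.1 (?_ : (bil n n).re * _ = 0)).resolve_right h2
      linear_combination (bil y n).re * hx3 - (bil x n).re * hy3
    · refine (mul_eq_zero.1 (?_ : (bil n n).im * _ = 0)).resolve_right h2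
      linear_combination (bil y n).im * hx3 - (bil x n).im * hy3
  have h4 : ∀ w ∈ W, bil w n • star n ∈ W := by
    intro w hw
    have h := h1 w hw
    rwa [hβ, zero_smul, sub_zero] at h
  have h5 : ∀ γ : ℂ, γ • star n ∈ W := by
    intro γ
    set p := bil x n
    set q := bil y n
    simp only [Complex.mul_im, Complex.conj_re, Complex.conj_im] at h2
    set d := q.re * p.im + -q.im * p.re with hd
    have e : γ = (((q.re * γ.im - q.im * γ.re) / d : ℝ) : ℂ) * p
        + (((γ.re * p.im - γ.im * p.re) / d : ℝ) : ℂ) * q := by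
      apply Complex.ext
      · rw [Complex.add_re, Complex.re_ofReal_mul, Complex.re_ofReal_mul]
        field_simp
        rw [hd]; ring
      · rw [Complex.add_im, Complex.im_ofReal_mul, Complex.im_ofReal_mul]
        field_simp
        rw [hd]; ring
    rw [e, add_smul, ← smul_smul, ← smul_smul, Complex.coe_smul, Complex.coe_smul]
    exact W.add_mem (W.smul_mem _ (h4 x hx)) (W.smul_mem _ (h4 y hy))
  have h6 := curvature_mem hR (by simpa using h5 1) (h5 Complex.I) hn
  have e1 : bil (star n) n = (herm n n).re := by
    apply Complex.ext
    · simp [bil, herm]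
    · simpa [bil, herm] using herm_im_self n
  have e2 : bil (Complex.I • star n) n = Complex.I * (herm n n).re := by
    rw [← e1]; simp [bil]
  have e3 : (herm (star n) (Complex.I • star n)).im = (herm n n).re := by
    rw [herm_im_eq, herm_self_re_eq]; simp; ring
  have h7 : (Complex.I : ℂ) • n ∈ W := by
    rw [hnull' _ (h5 Complex.I), hnull' (star n) (by simpa using h5 1), e1, e2, e3] at h6
    have e4 : (6 * (herm n n).re) • Complex.I • n = (0 : ℝ) • Complex.I • star n
        - (0 : ℝ) • Complex.I • Complex.I • star n
        - (2 * (herm n n).re) • Complex.I • n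
        + (4 : ℝ) • ((Complex.I * ((herm n n).re : ℂ)) • star (star n)
          - ((herm n n).re : ℂ) • star (Complex.I • star n)) := by
      ext i
      apply Complex.ext <;> simp <;> ring
    rw [← e4] at h6
    have := W.smul_mem (6 * (herm n n).re)⁻¹ h6
    rwa [smul_smul, inv_mul_cancel₀ (by simpa using hnn), one_smul] at this
  have h8 := hnull' _ h7
  rw [herm_im_I_left] at h8
  exact hnn (by linarith)

/-! ### Lagrangian invariant subspaces -/

/-- The inclusion `ℝ³ → ℂ³`. -/
def cx : (Fin 3 → ℝ) →ₗ[ℝ] (Fin 3 → ℂ) where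
  toFun a i := (a i : ℂ)
  map_add' a b := by ext i; simp
  map_smul' r a := by ext i; simp

@[simp] lemma cx_apply (a : Fin 3 → ℝ) (i : Fin 3) : cx a i = (a i : ℂ) := rfl

/-- Multiplication by a complex number on `ℂ³`, as a real-linear map. -/
def mulC (μ : ℂ) : (Fin 3 → ℂ) →ₗ[ℝ] (Fin 3 → ℂ) where
  toFun z := μ • z
  map_add' := smul_add μ
  map_smul' r z := smul_comm μ r z

@[simp] lemma mulC_apply (μ : ℂ) (z : Fin 3 → ℂ) : mulC μ z = μ • z := rfl

/-- The subspace `μ⁻¹ W`. -/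
def rot (μ : ℂ) (W : Submodule ℝ (Fin 3 → ℂ)) : Submodule ℝ (Fin 3 → ℂ) := W.comap (mulC μ)

lemma mem_rot {μ : ℂ} {W : Submodule ℝ (Fin 3 → ℂ)} {z : Fin 3 → ℂ} :
    z ∈ rot μ W ↔ μ • z ∈ W := Iff.rfl

lemma finrank_rot {μ : ℂ} (hμ : μ ≠ 0) (W : Submodule ℝ (Fin 3 → ℂ)) :
    Module.finrank ℝ (rot μ W) = Module.finrank ℝ W := by
  let e : (Fin 3 → ℂ) ≃ₗ[ℝ] (Fin 3 → ℂ) := LinearEquiv.ofLinearMap (mulC μ) (mulC μ⁻¹)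
    (LinearMap.ext fun z => by simp [smul_smul, hμ])
    (LinearMap.ext fun z => by simp [smul_smul, hμ])
  have h : rot μ W = W.map (e.symm : (Fin 3 → ℂ) →ₗ[ℝ] (Fin 3 → ℂ)) :=
    Submodule.comap_equiv_eq_map_symm e W
  rw [h]
  exact LinearEquiv.finrank_map_eq e.symm W

lemma herm_smul_smul (μ : ℂ) (x y : Fin 3 → ℂ) :
    herm (μ • x) (μ • y) = (starRingEnd ℂ μ * μ) * herm x y := by
  simp [herm]; ring

lemma bil_smul_smul (μ : ℂ) (x y : Fin 3 → ℂ) : bil (μ • x) (μ • y) = μ * μ * bil x y := by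
  simp [bil]; ring

lemma lagrangian_rot {μ : ℂ} (hμ : starRingEnd ℂ μ * μ = 1) {W : Submodule ℝ (Fin 3 → ℂ)}
    (hL : ∀ x ∈ W, ∀ y ∈ W, (herm x y).im = 0) :
    ∀ x ∈ rot μ W, ∀ y ∈ rot μ W, (herm x y).im = 0 := by
  intro x hx y hy
  have h := hL _ hx _ hy
  rwa [mulC_apply, mulC_apply, herm_smul_smul, hμ, one_mul] at h

/-- A Lagrangian `W` satisfies `W ⊕ iW = ℂ³`. -/
lemma exists_decomp {W : Submodule ℝ (Fin 3 → ℂ)} (hdim : Module.finrank ℝ W = 3)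
    (hL : ∀ x ∈ W, ∀ y ∈ W, (herm x y).im = 0) (u : Fin 3 → ℂ) :
    ∃ x ∈ W, ∃ y ∈ W, u = x + Complex.I • y := by
  have hdis : Disjoint W (rot Complex.I W) := by
    rw [Submodule.disjoint_def]
    intro x hx hx'
    have h := hL _ hx' _ hx
    rw [mulC_apply, herm_im_I_left] at h
    exact eq_zero_of_herm_self (by linarith)
  have htop : W ⊔ rot Complex.I W = ⊤ := by
    apply Submodule.eq_top_of_disjoint _ _ _ hdis
    rw [finrank_rot Complex.I_ne_zero, hdim]
    have : Module.finrank ℝ (Fin 3 → ℂ) = 6 := by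
      rw [Module.finrank_pi_fintype]; simp [Complex.finrank_real_complex]
    rw [this]
  have hu : u ∈ W ⊔ rot Complex.I W := by rw [htop]; trivial
  obtain ⟨x, hx, y, hy, rfl⟩ := Submodule.mem_sup.1 hu
  refine ⟨x, hx, -(Complex.I • y), W.neg_mem hy, ?_⟩
  rw [smul_neg, smul_smul, Complex.I_mul_I]; simp

/-- Lagrangian subspaces are maximal isotropic. -/
lemma mem_of_isotropic {W : Submodule ℝ (Fin 3 → ℂ)} (hdim : Module.finrank ℝ W = 3)
    (hL : ∀ x ∈ W, ∀ y ∈ W, (herm x y).im = 0) {u : Fin 3 → ℂ}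
    (hu : ∀ w ∈ W, (herm u w).im = 0) : u ∈ W := by
  obtain ⟨x, hx, y, hy, rfl⟩ := exists_decomp hdim hL u
  have h := hu y hy
  rw [herm_im_add_left, hL x hx y hy, herm_im_I_left] at h
  have hy0 : y = 0 := eq_zero_of_herm_self (by linarith)
  simpa [hy0] using hx

lemma exists_bil_ne_zero {W : Submodule ℝ (Fin 3 → ℂ)} (hdim : Module.finrank ℝ W = 3)
    (hL : ∀ x ∈ W, ∀ y ∈ W, (herm x y).im = 0) : ∃ x ∈ W, bil x x ≠ 0 := by
  by_contra! h
  have hB : ∀ x ∈ W, ∀ y ∈ W, bil x y = 0 := by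
    intro x hx y hy
    have h1 := h _ (W.add_mem hx hy)
    have e : bil (x + y) (x + y) = bil x x + 2 * bil x y + bil y y := by
      simp [bil, dotProduct, Fin.sum_univ_three]; ring
    rw [e, h x hx, h y hy] at h1
    simpa using h1
  obtain ⟨x, hx, y, hy, he⟩ := exists_decomp hdim hL ![1, 0, 0]
  have h1 : bil ![1, 0, 0] ![1, 0, 0] = 1 := by
    simp [bil, dotProduct, Fin.sum_univ_three]
  have e : bil (x + Complex.I • y) (x + Complex.I • y)
      = bil x x + 2 * Complex.I * bil x y - bil y y := by
    simp [bil, dotProduct, Fin.sum_univ_three]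
    ring_nf
    simp
    ring
  rw [he, e, hB x hx x hx, hB x hx y hy, hB y hy y hy] at h1
  simp at h1

/-- On an invariant Lagrangian subspace the real and imaginary parts of the bilinear form are
proportional: pairing the curvature condition with `ω` equates an expression symmetric in `y, z` with
one that is antisymmetric. -/
lemma bil_proportional {W : Submodule ℝ (Fin 3 → ℂ)}
    (hL : ∀ x ∈ W, ∀ y ∈ W, (herm x y).im = 0)
    (hR : ∀ x ∈ W, ∀ y ∈ W, ∀ z ∈ W, modelR x y z ∈ W) :
    ∀ x ∈ W, ∀ y ∈ W, ∀ z ∈ W, ((starRingEnd ℂ) (bil x x) * bil y z).im = 0 := by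
  have key : ∀ x ∈ W, ∀ y ∈ W, ∀ z ∈ W, ((starRingEnd ℂ) (bil x x) * bil y z).im
      = ((starRingEnd ℂ) (bil x y) * bil x z).im := by
    intro x hx y hy z hz
    have h := hL _ (curvature_mem hR hy hx hx) z hz
    rw [hL x hx x hx, hL y hy x hx] at h
    simp only [herm_im_add_left, herm_im_sub_left, herm_im_smul_left, herm_im_conj_left,
      bil_comm y x] at h
    linarith
  intro x hx y hy z hz
  have h1 := key x hx y hy z hz
  have h2 := key x hx z hz y hy
  have e : ((starRingEnd ℂ) (bil x z) * bil x y).im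
      = -((starRingEnd ℂ) (bil x y) * bil x z).im := by simp; ring
  rw [bil_comm z y, e] at h2
  linarith

/-- An invariant `W` becomes closed under complex conjugation after multiplication by a scalar of
modulus one, a square root of the common phase of the values of the bilinear form on `W`. -/
lemma exists_conj_closed {W : Submodule ℝ (Fin 3 → ℂ)} (hdim : Module.finrank ℝ W = 3)
    (hR : ∀ x ∈ W, ∀ y ∈ W, ∀ z ∈ W, modelR x y z ∈ W) :
    ∃ μ : ℂ, starRingEnd ℂ μ * μ = 1 ∧ ∀ z ∈ rot μ W, star z ∈ rot μ W := by
  have hL := lagrangian_of_invariant hdim hR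
  obtain ⟨x, hx, hβ⟩ := exists_bil_ne_zero hdim hL
  set β := bil x x with hβ'
  set μ := Complex.exp ((β.arg / 2 : ℝ) * Complex.I) with hμ
  have hμ1 : starRingEnd ℂ μ * μ = 1 := by
    rw [← Complex.normSq_eq_conj_mul_self, Complex.normSq_eq_norm_sq, hμ,
      Complex.norm_exp_ofReal_mul_I]
    simp
  have hμ0 : μ ≠ 0 := Complex.exp_ne_zero _
  have hβμ : β = (‖β‖ : ℂ) * (μ * μ) := by
    rw [hμ, ← Complex.exp_add]
    conv_lhs => rw [← Complex.norm_mul_exp_arg_mul_I β]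
    congr 2
    push_cast
    ring
  refine ⟨μ, hμ1, fun z hz => ?_⟩
  refine mem_of_isotropic ((finrank_rot hμ0 W).trans hdim) (lagrangian_rot hμ1 hL) fun w hw => ?_
  have h := bil_proportional hL hR x hx _ hz _ hw
  rw [mulC_apply, mulC_apply, bil_smul_smul, ← hβ', hβμ] at h
  have e : (starRingEnd ℂ) ((‖β‖ : ℂ) * (μ * μ)) * (μ * μ * bil z w) = (‖β‖ : ℝ) * bil z w := by
    simp only [map_mul, Complex.conj_ofReal]
    linear_combination (‖β‖ : ℂ) * bil z w * (starRingEnd ℂ μ * μ + 1) * hμ1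
  rw [e, Complex.im_ofReal_mul] at h
  have h' := (mul_eq_zero.1 h).resolve_left (norm_ne_zero_iff.2 hβ)
  have e2 : herm (star z) w = bil z w := by simp [herm, bil]
  rw [e2, h']

/-- A conjugation-closed Lagrangian subspace whose real points form at most a line is `iℝ³` or
`ℝn ⊕ i n^⊥`. -/
lemma conj_closed_normal_form {U : Submodule ℝ (Fin 3 → ℂ)} (hdim : Module.finrank ℝ U = 3)
    (hL : ∀ x ∈ U, ∀ y ∈ U, (herm x y).im = 0) (hc : ∀ z ∈ U, star z ∈ U)
    (hA : Module.finrank ℝ (U.comap cx) ≤ 1) :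
    (∀ a : Fin 3 → ℝ, Complex.I • cx a ∈ U) ∨
      ∃ n : Fin 3 → ℝ, n ⬝ᵥ n = 1 ∧ cx n ∈ U ∧
        ∀ b : Fin 3 → ℝ, b ⬝ᵥ n = 0 → Complex.I • cx b ∈ U := by
  have hre : ∀ z ∈ U, cx (fun i => (z i).re) ∈ U := by
    intro z hz
    have h := U.smul_mem (2 : ℝ)⁻¹ (U.add_mem hz (hc z hz))
    convert h using 1
    ext i
    apply Complex.ext <;> simp
    ring
  have him : ∀ (b : Fin 3 → ℝ) (w : Fin 3 → ℂ),
      (herm (Complex.I • cx b) w).im = -(b ⬝ᵥ fun i => (w i).re) := by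
    intro b w
    rw [herm_im_eq]
    simp [dotProduct, Fin.sum_univ_three]
    ring
  obtain ⟨⟨m, hm⟩, hspan⟩ := finrank_le_one_iff.1 hA
  have hspan' : ∀ z ∈ U, ∃ c : ℝ, (fun i => (z i).re) = c • m := by
    intro z hz
    obtain ⟨c, hc⟩ := hspan ⟨_, hre z hz⟩
    exact ⟨c, (congrArg Subtype.val hc).symm⟩
  by_cases hm0 : m = 0
  · left
    intro a
    refine mem_of_isotropic hdim hL fun w hw => ?_
    obtain ⟨c, hc⟩ := hspan' w hw
    rw [him, hc, hm0]
    simp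
  · right
    have hpos : 0 < m ⬝ᵥ m := by
      have := dotProduct_star_self_pos_iff (v := m)
      simpa using this.2 hm0
    refine ⟨(Real.sqrt (m ⬝ᵥ m))⁻¹ • m, ?_, ?_, fun b hb => ?_⟩
    · rw [smul_dotProduct, dotProduct_smul, smul_smul, smul_eq_mul, ← mul_inv,
        Real.mul_self_sqrt hpos.le, inv_mul_cancel₀ hpos.ne']
    · rw [map_smul]
      exact U.smul_mem _ hm
    · refine mem_of_isotropic hdim hL fun w hw => ?_
      obtain ⟨c, hc⟩ := hspan' w hw
      have hb' : b ⬝ᵥ m = 0 := by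
        rw [dotProduct_smul, smul_eq_mul] at hb
        exact (mul_eq_zero.1 hb).resolve_left (inv_ne_zero (Real.sqrt_pos.2 hpos).ne')
      rw [him, hc, dotProduct_smul, hb']
      simp

/-- The curvature condition alone leaves exactly the subspaces `μ ℝ³` and `μ (ℝn ⊕ i n^⊥)`. -/
lemma invariant_normal_form {W : Submodule ℝ (Fin 3 → ℂ)} (hdim : Module.finrank ℝ W = 3)
    (hR : ∀ x ∈ W, ∀ y ∈ W, ∀ z ∈ W, modelR x y z ∈ W) :
    ∃ μ : ℂ, starRingEnd ℂ μ * μ = 1 ∧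
      ((∀ a : Fin 3 → ℝ, μ • cx a ∈ W) ∨
        ∃ n : Fin 3 → ℝ, n ⬝ᵥ n = 1 ∧ μ • cx n ∈ W ∧
          ∀ b : Fin 3 → ℝ, b ⬝ᵥ n = 0 → μ • Complex.I • cx b ∈ W) := by
  have hL := lagrangian_of_invariant hdim hR
  obtain ⟨μ, hμ, hc⟩ := exists_conj_closed hdim hR
  have hμ0 : μ ≠ 0 := right_ne_zero_of_mul_eq_one hμ
  have hI : starRingEnd ℂ Complex.I * Complex.I = 1 := by simp
  have hdimU := (finrank_rot hμ0 W).trans hdim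
  have hLU := lagrangian_rot hμ hL
  have hμI : starRingEnd ℂ (μ * Complex.I) * (μ * Complex.I) = 1 := by
    rw [map_mul]
    linear_combination (starRingEnd ℂ μ * μ) * hI + hμ
  have hsum : Module.finrank ℝ ((rot μ W).comap cx)
      + Module.finrank ℝ ((rot Complex.I (rot μ W)).comap cx) ≤ 3 := by
    have hdis : Disjoint ((rot μ W).comap cx) ((rot Complex.I (rot μ W)).comap cx) := by
      rw [Submodule.disjoint_def]
      intro a ha ha'
      have h := hLU _ ha' _ ha
      rw [mulC_apply, herm_im_I_left] at h
      have h0 := eq_zero_of_herm_self (x := cx a) (by linarith)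
      ext i
      simpa using congrFun h0 i
    have := Submodule.finrank_add_finrank_le_of_disjoint hdis
    simpa using this
  by_cases hA : Module.finrank ℝ ((rot μ W).comap cx) ≤ 1
  · rcases conj_closed_normal_form hdimU hLU hc hA with h | ⟨n, hn, h1, h2⟩
    · refine ⟨μ * Complex.I, hμI, Or.inl fun a => ?_⟩
      rw [mul_smul]
      exact h a
    · exact ⟨μ, hμ, Or.inr ⟨n, hn, h1, h2⟩⟩
  · have hc' : ∀ z ∈ rot Complex.I (rot μ W), star z ∈ rot Complex.I (rot μ W) := by
      intro z hz
      have h := (rot μ W).neg_mem (hc _ hz)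
      rw [mem_rot]
      convert h using 1
      simp [star_smul]
    rcases conj_closed_normal_form ((finrank_rot Complex.I_ne_zero _).trans hdimU)
      (lagrangian_rot hI hLU) hc' (by omega) with h | ⟨n, hn, h1, h2⟩
    · refine ⟨μ, hμ, Or.inl fun a => ?_⟩
      have h' := W.neg_mem (h a)
      simp only [mulC_apply, smul_smul] at h'
      rw [← neg_smul] at h'
      convert h' using 2
      rw [Complex.I_mul_I]; ring
    · refine ⟨μ * Complex.I, hμI, Or.inr ⟨n, hn, ?_, fun b hb => ?_⟩⟩
      · rw [mul_smul]
        exact h1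
      · rw [mul_smul]
        exact h2 b hb

/-! ### Half-turns and the covariant derivative of the curvature -/

/-- The half-turn of `ℂ³` about the real axis spanned by a unit vector `u`. -/
def halfTurn (u : Fin 3 → ℝ) : (Fin 3 → ℂ) →ₗ[ℝ] (Fin 3 → ℂ) where
  toFun z := (2 * bil (cx u) z) • cx u - z
  map_add' x y := by
    simp only [bil, dotProduct_add]
    module
  map_smul' r x := by
    ext i
    simp [bil]
    ring

lemma halfTurn_apply (u : Fin 3 → ℝ) (z : Fin 3 → ℂ) (i : Fin 3) :
    halfTurn u z i = 2 * (u 0 * z 0 + u 1 * z 1 + u 2 * z 2) * u i - z i := by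
  simp [halfTurn, bil, dotProduct, Fin.sum_univ_three]

lemma halfTurn_star (u : Fin 3 → ℝ) (z : Fin 3 → ℂ) :
    halfTurn u (star z) = star (halfTurn u z) := by
  ext i
  simp [halfTurn_apply]

lemma halfTurn_smul (u : Fin 3 → ℝ) (μ : ℂ) (z : Fin 3 → ℂ) :
    halfTurn u (μ • z) = μ • halfTurn u z := by
  ext i
  simp [halfTurn_apply]
  ring

lemma unit_coords {u : Fin 3 → ℝ} (hu : u ⬝ᵥ u = 1) :
    (u 0 : ℂ) * u 0 + u 1 * u 1 + u 2 * u 2 = 1 := by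
  simp only [dotProduct, Fin.sum_univ_three] at hu
  exact_mod_cast hu

lemma halfTurn_halfTurn {u : Fin 3 → ℝ} (hu : u ⬝ᵥ u = 1) (z : Fin 3 → ℂ) :
    halfTurn u (halfTurn u z) = z := by
  have h := unit_coords hu
  ext i
  simp only [halfTurn_apply]
  linear_combination (4 * (u 0 * z 0 + u 1 * z 1 + u 2 * z 2) * u i : ℂ) * h

lemma halfTurn_cross {u : Fin 3 → ℝ} (hu : u ⬝ᵥ u = 1) (x y : Fin 3 → ℂ) :
    halfTurn u x ⨯₃ halfTurn u y = halfTurn u (x ⨯₃ y) := by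
  have h := unit_coords hu
  ext i
  fin_cases i <;> simp [halfTurn_apply, cross_apply]
  · linear_combination (-2 * (x 1 * y 2 - x 2 * y 1)) * h
  · linear_combination (-2 * (x 2 * y 0 - x 0 * y 2)) * h
  · linear_combination (-2 * (x 0 * y 1 - x 1 * y 0)) * h

lemma herm_halfTurn {u : Fin 3 → ℝ} (hu : u ⬝ᵥ u = 1) (x y : Fin 3 → ℂ) :
    herm (halfTurn u x) (halfTurn u y) = herm x y := by
  have h := unit_coords hu
  simp only [herm, dotProduct, Fin.sum_univ_three, ← halfTurn_star, halfTurn_apply]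
  linear_combination (4 * (u 0 * star x 0 + u 1 * star x 1 + u 2 * star x 2)
    * (u 0 * y 0 + u 1 * y 1 + u 2 * y 2) : ℂ) * h

lemma modelD_halfTurn {u : Fin 3 → ℝ} (hu : u ⬝ᵥ u = 1) (x y : Fin 3 → ℂ) :
    modelD (halfTurn u x) (halfTurn u y) = halfTurn u (modelD x y) := by
  rw [modelD, halfTurn_cross hu, ← halfTurn_star, ← map_smul, modelD]

lemma modelR_halfTurn {u : Fin 3 → ℝ} (hu : u ⬝ᵥ u = 1) (x y z : Fin 3 → ℂ) :
    modelR (halfTurn u x) (halfTurn u y) (halfTurn u z) = halfTurn u (modelR x y z) := by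
  simp only [modelR, modelK, modelD_halfTurn hu, ← halfTurn_star, halfTurn_cross hu, ← map_add,
    ← map_smul, ← map_sub]

lemma modelN_halfTurn {u : Fin 3 → ℝ} (hu : u ⬝ᵥ u = 1) (v x y z : Fin 3 → ℂ) :
    modelN (halfTurn u v) (halfTurn u x) (halfTurn u y) (halfTurn u z)
      = halfTurn u (modelN v x y z) := by
  simp only [modelN, modelD_halfTurn hu, modelR_halfTurn hu, ← map_sub]

/-- One component of `∇R` on the frame of `μ ℝ³` (`ε = 1`) or of `μ (ℝe ⊕ i e^⊥)` (`ε = i`). -/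
lemma herm_modelN (μ ε : ℂ) (hε : ε = 1 ∨ ε = Complex.I) :
    (herm ![0, 0, μ * ε] (modelN ![μ, 0, 0] ![μ, 0, 0] ![0, μ * ε, 0] ![μ, 0, 0])).im
      = ((Real.sqrt 12)⁻¹ * (2 / 3)) * (Complex.normSq μ * (μ ^ 3).im) := by
  have hR : ∀ x y z, modelR x y z = (1 / 12 : ℝ) • (star x ⨯₃ (y ⨯₃ z))
      - (1 / 12 : ℝ) • (star y ⨯₃ (x ⨯₃ z)) - modelK x y z
      - (1 / 12 : ℝ) • ((2 : ℝ) • ((x ⨯₃ y) ⨯₃ star z)) := by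
    intro x y z
    rw [modelR, modelD_modelD, modelD_modelD, modelD_two_modelD]
  have hst : ∀ a b c : ℂ, star ![a, b, c] = ![star a, star b, star c] := by
    intro a b c; ext i; fin_cases i <;> simp
  simp only [modelN, hR]
  unfold modelD
  generalize (Real.sqrt 12)⁻¹ = c
  rcases hε with rfl | rfl <;>
  · simp [modelK, hst, cross_apply, herm, dotProduct, Fin.sum_univ_three,
      pow_succ, Complex.normSq_apply]
    ring

/-- A half-turn moves the first coordinate vector to any unit vector with nonnegative first
coordinate. -/
lemma exists_halfTurn {n : Fin 3 → ℝ} (hn : n ⬝ᵥ n = 1) (h0 : 0 ≤ n 0) :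
    ∃ u : Fin 3 → ℝ, u ⬝ᵥ u = 1 ∧ halfTurn u ![1, 0, 0] = cx n := by
  simp only [dotProduct, Fin.sum_univ_three] at hn
  have hpos : 0 < 2 + 2 * n 0 := by linarith
  have hs := Real.mul_self_sqrt hpos.le
  have hs0 := (Real.sqrt_pos.2 hpos).ne'
  set s := Real.sqrt (2 + 2 * n 0)
  have key : ∀ a b : ℝ, (s⁻¹ * a) * (s⁻¹ * b) = a * b / (2 + 2 * n 0) := by
    intro a b
    rw [← hs]
    field_simp
  -- the axis bisects the first coordinate vector and `n`
  refine ⟨s⁻¹ • ![n 0 + 1, n 1, n 2], ?_, ?_⟩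
  · simp only [dotProduct, Fin.sum_univ_three, Pi.smul_apply, smul_eq_mul, key]
    simp
    field_simp
    linear_combination hn
  · have key' : ∀ a b : ℝ, 2 * ((s⁻¹ * a : ℝ) : ℂ) * ((s⁻¹ * b : ℝ) : ℂ)
        = ((2 * (a * b / (2 + 2 * n 0)) : ℝ) : ℂ) := by
      intro a b
      rw [← key]
      push_cast
      ring
    ext i
    rw [halfTurn_apply]
    simp only [Pi.smul_apply, smul_eq_mul, cx_apply]
    have e : ∀ t : ℂ, 2 * (((s⁻¹ * ![n 0 + 1, n 1, n 2] 0 : ℝ) : ℂ) * ![1, 0, 0] 0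
        + ((s⁻¹ * ![n 0 + 1, n 1, n 2] 1 : ℝ) : ℂ) * ![1, 0, 0] 1
        + ((s⁻¹ * ![n 0 + 1, n 1, n 2] 2 : ℝ) : ℂ) * ![1, 0, 0] 2) * t
        = 2 * ((s⁻¹ * (n 0 + 1) : ℝ) : ℂ) * t := by
      intro t; simp
    rw [e, key']
    have e2 : ∀ b : ℝ, 2 * ((n 0 + 1) * b / (2 + 2 * n 0)) = b := by
      intro b
      field_simp
      ring
    rw [e2]
    fin_cases i <;> simp

/-- A frame of `W` in normal position: up to a half-turn and a scalar `μ` of modulus one, `W`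
contains the coordinate frame of `ℝ³` (`ε = 1`) or of `ℝ ⊕ iℝ²` (`ε = i`). -/
lemma exists_frame {W : Submodule ℝ (Fin 3 → ℂ)} (hdim : Module.finrank ℝ W = 3)
    (hR : ∀ x ∈ W, ∀ y ∈ W, ∀ z ∈ W, modelR x y z ∈ W) :
    ∃ (u : Fin 3 → ℝ) (μ ε : ℂ), u ⬝ᵥ u = 1 ∧ starRingEnd ℂ μ * μ = 1 ∧
      (ε = 1 ∨ ε = Complex.I) ∧ halfTurn u ![μ, 0, 0] ∈ W ∧ halfTurn u ![0, μ * ε, 0] ∈ W ∧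
      halfTurn u ![0, 0, μ * ε] ∈ W := by
  have hreal : ∀ (u : Fin 3 → ℝ) (e : Fin 3 → ℝ), halfTurn u (cx e) =
      cx fun i => 2 * (u 0 * e 0 + u 1 * e 1 + u 2 * e 2) * u i - e i := by
    intro u e
    ext i
    simp [halfTurn_apply]
  have hv1 : ∀ μ : ℂ, (![μ, 0, 0] : Fin 3 → ℂ) = μ • cx ![1, 0, 0] := by
    intro μ; ext i; fin_cases i <;> simp
  have hv2 : ∀ μ : ℂ, (![0, μ, 0] : Fin 3 → ℂ) = μ • cx ![0, 1, 0] := by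
    intro μ; ext i; fin_cases i <;> simp
  have hv3 : ∀ μ : ℂ, (![0, 0, μ] : Fin 3 → ℂ) = μ • cx ![0, 0, 1] := by
    intro μ; ext i; fin_cases i <;> simp
  obtain ⟨μ, hμ, h | ⟨n, hn, h1, h2⟩⟩ := invariant_normal_form hdim hR
  · refine ⟨![1, 0, 0], μ, 1, by simp, hμ, Or.inl rfl, ?_, ?_, ?_⟩
    · rw [hv1, halfTurn_smul, hreal]; exact h _
    · rw [hv2, halfTurn_smul, hreal, mul_one]; exact h _
    · rw [hv3, halfTurn_smul, hreal, mul_one]; exact h _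
  · obtain ⟨n, hn, hn0, h1, h2⟩ : ∃ n : Fin 3 → ℝ, n ⬝ᵥ n = 1 ∧ 0 ≤ n 0 ∧ μ • cx n ∈ W ∧
        ∀ b : Fin 3 → ℝ, b ⬝ᵥ n = 0 → μ • Complex.I • cx b ∈ W := by
      rcases le_total 0 (n 0) with h0 | h0
      · exact ⟨n, hn, h0, h1, h2⟩
      · refine ⟨-n, by simpa using hn, by simpa using h0, ?_, fun b hb => h2 b (by simpa using hb)⟩
        rw [map_neg, smul_neg]
        exact W.neg_mem h1
    obtain ⟨u, hu, hun⟩ := exists_halfTurn hn hn0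
    have horth : ∀ e : Fin 3 → ℝ, e 0 = 0 →
        (fun i => 2 * (u 0 * e 0 + u 1 * e 1 + u 2 * e 2) * u i - e i) ⬝ᵥ n = 0 := by
      intro e he
      have h := herm_halfTurn hu (cx e) ![1, 0, 0]
      rw [hun, hreal] at h
      have hcx : ∀ a b : Fin 3 → ℝ, herm (cx a) (cx b) = ((a ⬝ᵥ b : ℝ) : ℂ) := by
        intro a b
        simp [herm, dotProduct, Fin.sum_univ_three]
      have h0 : herm (cx e) ![1, 0, 0] = 0 := by
        simp [herm, dotProduct, Fin.sum_univ_three, he]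
      rw [hcx, h0] at h
      exact_mod_cast h
    have hun' : halfTurn u (cx ![1, 0, 0]) = cx n := by
      rw [← hun]; congr 1; ext i; fin_cases i <;> simp
    refine ⟨u, μ, Complex.I, hu, hμ, Or.inr rfl, ?_, ?_, ?_⟩
    · rw [hv1, halfTurn_smul, hun']; exact h1
    · rw [hv2, halfTurn_smul, hreal, mul_smul]; exact h2 _ (horth _ (by simp))
    · rw [hv3, halfTurn_smul, hreal, mul_smul]; exact h2 _ (horth _ (by simp))

/-- The covariant derivative of the curvature forces the scalar `μ` to be a cube root of unity. -/
lemma exists_frame_cube {W : Submodule ℝ (Fin 3 → ℂ)} (hdim : Module.finrank ℝ W = 3)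
    (hR : ∀ x ∈ W, ∀ y ∈ W, ∀ z ∈ W, modelR x y z ∈ W)
    (hN : ∀ v ∈ W, ∀ x ∈ W, ∀ y ∈ W, ∀ z ∈ W, modelN v x y z ∈ W) :
    ∃ (u : Fin 3 → ℝ) (μ ε : ℂ), u ⬝ᵥ u = 1 ∧ μ ^ 3 = 1 ∧
      (ε = 1 ∨ ε = Complex.I) ∧ halfTurn u ![μ, 0, 0] ∈ W ∧ halfTurn u ![0, μ * ε, 0] ∈ W ∧
      halfTurn u ![0, 0, μ * ε] ∈ W := by
  obtain ⟨u, μ, ε, hu, hμ, hε, h1, h2, h3⟩ := exists_frame hdim hR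
  have h := lagrangian_of_invariant hdim hR _ h3 _ (hN _ h1 _ h1 _ h2 _ h1)
  have hsq : Complex.normSq μ = 1 := by
    have := Complex.normSq_eq_conj_mul_self (z := μ)
    rw [hμ] at this
    exact_mod_cast this
  have hs : (Real.sqrt 12)⁻¹ ≠ 0 := by positivity
  rw [modelN_halfTurn hu, herm_halfTurn hu, herm_modelN μ ε hε, hsq, one_mul] at h
  have him : (μ ^ 3).im = 0 := (mul_eq_zero.1 h).resolve_left (by positivity)
  have hre : (μ ^ 3).re = 1 ∨ (μ ^ 3).re = -1 := by
    have h' : Complex.normSq (μ ^ 3) = 1 := by rw [map_pow, hsq, one_pow]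
    rw [Complex.normSq_apply, him, mul_zero, add_zero] at h'
    exact mul_self_eq_one_iff.1 h'
  rcases hre with hre | hre
  · exact ⟨u, μ, ε, hu, Complex.ext (by simpa using hre) (by simpa using him), hε, h1, h2, h3⟩
  · refine ⟨u, -μ, ε, hu, ?_, hε, ?_, ?_, ?_⟩
    · rw [Odd.neg_pow (by decide)]
      exact Complex.ext (by simp [hre]) (by simp [him])
    all_goals
    · rw [← Submodule.neg_mem_iff, ← map_neg]
      simpa


/-! ### The model and the Lie algebra -/

/-- The identification `ℝ³ ≅ 𝔰𝔲(2)` given by the basis `H, E, F`. -/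
def su : (Fin 3 → ℝ) →ₗ[ℝ] M2 where
  toFun a := a 0 • Hm + a 1 • Em + a 2 • Fm
  map_add' a b := by simp only [Pi.add_apply]; module
  map_smul' r a := by simp only [Pi.smul_apply, RingHom.id_apply, smul_eq_mul]; module

lemma su_eq (a : Fin 3 → ℝ) : su a =
    !![a 0 * Complex.I, -a 1 + a 2 * Complex.I; a 1 + a 2 * Complex.I, -(a 0 * Complex.I)] := by
  ext i j
  fin_cases i <;> fin_cases j <;> simp [su, Hm, Em, Fm]

lemma su_injective : Function.Injective su := by
  rw [← LinearMap.ker_eq_bot, LinearMap.ker_eq_bot']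
  intro a ha
  rw [su_eq] at ha
  have h0 := congrArg Complex.im (congrFun (congrFun ha 0) 0)
  have h1 := congrArg Complex.re (congrFun (congrFun ha 1) 0)
  have h2 := congrArg Complex.im (congrFun (congrFun ha 1) 0)
  simp at h0 h1 h2
  ext i
  fin_cases i <;> simpa

lemma su_bracket (a b : Fin 3 → ℝ) : ⁅su a, su b⁆ = su ((-2 : ℝ) • (a ⨯₃ b)) := by
  rw [Ring.lie_def, su_eq, su_eq, su_eq]
  ext i j
  fin_cases i <;> fin_cases j <;> apply Complex.ext <;>
    simp [cross_apply] <;> ring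

/-- The diagonal embedding of `ℝ³ ≅ 𝔰𝔲(2)`, with image `𝔨`. -/
def kap : (Fin 3 → ℝ) →ₗ[ℝ] T3 := su.prod (su.prod su)

lemma kap_apply (a : Fin 3 → ℝ) : kap a = (su a, su a, su a) := rfl

/-- The real part of a vector of `ℂ³`. -/
def reV : (Fin 3 → ℂ) →ₗ[ℝ] (Fin 3 → ℝ) where
  toFun z i := (z i).re
  map_add' x y := by ext i; simp
  map_smul' r x := by ext i; simp

/-- The imaginary part of a vector of `ℂ³`. -/
def imV : (Fin 3 → ℂ) →ₗ[ℝ] (Fin 3 → ℝ) where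
  toFun z i := (z i).im
  map_add' x y := by ext i; simp
  map_smul' r x := by ext i; simp

@[simp] lemma reV_apply (z : Fin 3 → ℂ) (i : Fin 3) : reV z i = (z i).re := rfl

@[simp] lemma imV_apply (z : Fin 3 → ℂ) (i : Fin 3) : imV z i = (z i).im := rfl

/-- The identification `ℂ³ ≅ 𝔭` sending the standard basis to `e₁, e₂, e₃` and its multiples by `i`
to `e₄, e₅, e₆`. -/
def iot : (Fin 3 → ℂ) →ₗ[ℝ] T3 :=
  (su ∘ₗ ((Real.sqrt 12)⁻¹ • reV + (2 : ℝ)⁻¹ • imV)).prod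
    ((su ∘ₗ ((-2 * (Real.sqrt 12)⁻¹) • reV)).prod
      (su ∘ₗ ((Real.sqrt 12)⁻¹ • reV - (2 : ℝ)⁻¹ • imV)))

lemma iot_apply (z : Fin 3 → ℂ) : iot z =
    (su ((Real.sqrt 12)⁻¹ • reV z + (2 : ℝ)⁻¹ • imV z), su ((-2 * (Real.sqrt 12)⁻¹) • reV z),
      su ((Real.sqrt 12)⁻¹ • reV z - (2 : ℝ)⁻¹ • imV z)) := rfl

lemma kap_add_iot_eq_zero {a : Fin 3 → ℝ} {z : Fin 3 → ℂ} (h : kap a + iot z = 0) :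
    a = 0 ∧ z = 0 := by
  have hc : (Real.sqrt 12)⁻¹ ≠ 0 := by positivity
  rw [kap_apply, iot_apply, Prod.mk_add_mk, Prod.mk_add_mk, ← map_add, ← map_add, ← map_add,
    Prod.mk_eq_zero, Prod.mk_eq_zero] at h
  obtain ⟨h1, h2, h3⟩ := h
  rw [map_eq_zero_iff _ su_injective] at h1 h2 h3
  have key : ∀ i, a i = 0 ∧ (z i).re = 0 ∧ (z i).im = 0 := by
    intro i
    have h1 := congrFun h1 i
    have h2 := congrFun h2 i
    have h3 := congrFun h3 i
    simp only [Pi.add_apply, Pi.sub_apply, Pi.smul_apply, Pi.zero_apply, smul_eq_mul, reV_apply,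
      imV_apply] at h1 h2 h3
    have ha : a i = 0 := by linarith
    have hz : (Real.sqrt 12)⁻¹ * (z i).re = 0 := by linarith
    exact ⟨ha, (mul_eq_zero.1 hz).resolve_left hc, by linarith⟩
  exact ⟨funext fun i => (key i).1, funext fun i => Complex.ext (key i).2.1 (key i).2.2⟩

lemma iot_injective : Function.Injective iot := by
  rw [← LinearMap.ker_eq_bot, LinearMap.ker_eq_bot']
  intro z hz
  exact (kap_add_iot_eq_zero (a := 0) (by simpa using hz)).2

lemma kAlg_eq_s9 : kAlg = LinearMap.range kap := by
  apply le_antisymm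
  · rw [kAlg, Submodule.span_le]
    rintro _ (rfl | rfl | rfl)
    · exact ⟨![1, 0, 0], by simp [kap_apply, su]⟩
    · exact ⟨![0, 1, 0], by simp [kap_apply, su]⟩
    · exact ⟨![0, 0, 1], by simp [kap_apply, su]⟩
  · rintro _ ⟨a, rfl⟩
    have e : kap a = a 0 • ((Hm, Hm, Hm) : T3) + a 1 • ((Em, Em, Em) : T3)
        + a 2 • ((Fm, Fm, Fm) : T3) := rfl
    rw [e]
    exact add_mem (add_mem (Submodule.smul_mem _ _ (Submodule.subset_span (by simp)))
      (Submodule.smul_mem _ _ (Submodule.subset_span (by simp))))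
      (Submodule.smul_mem _ _ (Submodule.subset_span (by simp)))

lemma iot_e1 : iot ![1, 0, 0] = e1 := by
  simp [iot_apply, su, e1, smul_smul, mul_comm]

lemma iot_e2 : iot ![0, 1, 0] = e2 := by
  simp [iot_apply, su, e2, smul_smul, mul_comm]

lemma iot_e3 : iot ![0, 0, 1] = e3 := by
  simp [iot_apply, su, e3, smul_smul, mul_comm]

lemma iot_e4 : iot ![Complex.I, 0, 0] = e4 := by
  simp [iot_apply, su, e4]

lemma iot_e5 : iot ![0, Complex.I, 0] = e5 := by
  simp [iot_apply, su, e5]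

lemma iot_e6 : iot ![0, 0, Complex.I] = e6 := by
  simp [iot_apply, su, e6]

lemma iot_eq_sum (z : Fin 3 → ℂ) : iot z = (z 0).re • e1 + (z 1).re • e2 + (z 2).re • e3
    + (z 0).im • e4 + (z 1).im • e5 + (z 2).im • e6 := by
  rw [← iot_e1, ← iot_e2, ← iot_e3, ← iot_e4, ← iot_e5, ← iot_e6]
  simp only [← map_smul, ← map_add]
  congr 1
  ext i
  fin_cases i <;> apply Complex.ext <;> simp

lemma pAlg_eq_s9 : pAlg = LinearMap.range iot := by
  apply le_antisymm
  · rw [pAlg, Submodule.span_le]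
    rintro _ (rfl | rfl | rfl | rfl | rfl | rfl)
    · exact ⟨_, iot_e1⟩
    · exact ⟨_, iot_e2⟩
    · exact ⟨_, iot_e3⟩
    · exact ⟨_, iot_e4⟩
    · exact ⟨_, iot_e5⟩
    · exact ⟨_, iot_e6⟩
  · rintro _ ⟨z, rfl⟩
    rw [iot_eq_sum]
    have h : ∀ (r : ℝ) (e : T3), e ∈ ({e1, e2, e3, e4, e5, e6} : Set T3) → r • e ∈ pAlg :=
      fun r e he => Submodule.smul_mem _ _ (Submodule.subset_span he)
    exact add_mem (add_mem (add_mem (add_mem (add_mem (h _ _ (by simp)) (h _ _ (by simp)))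
      (h _ _ (by simp))) (h _ _ (by simp))) (h _ _ (by simp))) (h _ _ (by simp))

/-- The `𝔨`-component of the bracket of two vectors of `𝔭`. -/
def kPart (x y : Fin 3 → ℂ) : Fin 3 → ℝ :=
  (-(1 / 3) : ℝ) • (reV x ⨯₃ reV y + imV x ⨯₃ imV y)

lemma iot_bracket (x y : Fin 3 → ℂ) :
    ⁅iot x, iot y⁆ = kap (kPart x y) + iot ((2 : ℝ) • modelD x y) := by
  have hc := inv_sqrt_twelve_sq
  have e : ∀ p q r p' q' r' : M2, ⁅((p, q, r) : T3), ((p', q', r') : T3)⁆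
    = (⁅p, p'⁆, ⁅q, q'⁆, ⁅r, r'⁆) := fun _ _ _ _ _ _ => rfl
  rw [iot_apply, iot_apply, iot_apply, kap_apply, e, su_bracket, su_bracket, su_bracket,
    Prod.mk_add_mk, Prod.mk_add_mk, ← map_add, ← map_add, ← map_add, kPart, modelD]
  set c := (Real.sqrt 12)⁻¹
  refine Prod.ext (congrArg su ?_) (Prod.ext (congrArg su ?_) (congrArg su ?_))
  · ext i
    fin_cases i <;> simp [cross_apply]
    · linear_combination (-4 * ((x 1).re * (y 2).re - (x 2).re * (y 1).re)
        + 2 * ((x 1).im * (y 2).im - (x 2).im * (y 1).im)) * hc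
    · linear_combination (-4 * ((x 2).re * (y 0).re - (x 0).re * (y 2).re)
        + 2 * ((x 2).im * (y 0).im - (x 0).im * (y 2).im)) * hc
    · linear_combination (-4 * ((x 0).re * (y 1).re - (x 1).re * (y 0).re)
        + 2 * ((x 0).im * (y 1).im - (x 1).im * (y 0).im)) * hc
  · ext i
    fin_cases i <;> simp [cross_apply]
    · linear_combination (-4 * ((x 1).re * (y 2).re - (x 2).re * (y 1).re)
        - 4 * ((x 1).im * (y 2).im - (x 2).im * (y 1).im)) * hc
    · linear_combination (-4 * ((x 2).re * (y 0).re - (x 0).re * (y 2).re)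
        - 4 * ((x 2).im * (y 0).im - (x 0).im * (y 2).im)) * hc
    · linear_combination (-4 * ((x 0).re * (y 1).re - (x 1).re * (y 0).re)
        - 4 * ((x 0).im * (y 1).im - (x 1).im * (y 0).im)) * hc
  · ext i
    fin_cases i <;> simp [cross_apply]
    · linear_combination (-4 * ((x 1).re * (y 2).re - (x 2).re * (y 1).re)
        + 2 * ((x 1).im * (y 2).im - (x 2).im * (y 1).im)) * hc
    · linear_combination (-4 * ((x 2).re * (y 0).re - (x 0).re * (y 2).re)
        + 2 * ((x 2).im * (y 0).im - (x 0).im * (y 2).im)) * hc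
    · linear_combination (-4 * ((x 0).re * (y 1).re - (x 1).re * (y 0).re)
        + 2 * ((x 0).im * (y 1).im - (x 1).im * (y 0).im)) * hc

lemma kap_iot_bracket (x y z : Fin 3 → ℂ) :
    ⁅kap (kPart x y), iot z⁆ = iot (modelK x y z) := by
  have e : ∀ p q r p' q' r' : M2, ⁅((p, q, r) : T3), ((p', q', r') : T3)⁆
    = (⁅p, p'⁆, ⁅q, q'⁆, ⁅r, r'⁆) := fun _ _ _ _ _ _ => rfl
  rw [iot_apply, iot_apply, kap_apply, e, su_bracket, su_bracket, su_bracket, kPart, modelK]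
  refine Prod.ext (congrArg su ?_) (Prod.ext (congrArg su ?_) (congrArg su ?_)) <;>
  · ext i
    fin_cases i <;> simp [cross_apply] <;> ring

lemma proj_eq_s9 {πk πp : T3 → T3}
    (hdec : ∀ Z ∈ gAlg, πk Z ∈ kAlg ∧ πp Z ∈ pAlg ∧ πk Z + πp Z = Z)
    (a : Fin 3 → ℝ) (z : Fin 3 → ℂ) :
    πk (kap a + iot z) = kap a ∧ πp (kap a + iot z) = iot z := by
  have hg : kap a + iot z ∈ gAlg := by
    rw [gAlg, kAlg_eq_s9, pAlg_eq_s9]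
    exact Submodule.add_mem_sup ⟨a, rfl⟩ ⟨z, rfl⟩
  obtain ⟨h1, h2, h3⟩ := hdec _ hg
  rw [kAlg_eq_s9] at h1
  rw [pAlg_eq_s9] at h2
  obtain ⟨b, hb⟩ := h1
  obtain ⟨w, hw⟩ := h2
  rw [← hb, ← hw] at h3 ⊢
  have h0 : kap (b - a) + iot (w - z) = 0 := by
    rw [map_sub, map_sub]
    rw [sub_add_sub_comm, h3, sub_self]
  obtain ⟨hba, hwz⟩ := kap_add_iot_eq_zero h0
  rw [sub_eq_zero.1 hba, sub_eq_zero.1 hwz]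
  exact ⟨rfl, rfl⟩

lemma Dmap_iot {πk πp : T3 → T3}
    (hdec : ∀ Z ∈ gAlg, πk Z ∈ kAlg ∧ πp Z ∈ pAlg ∧ πk Z + πp Z = Z) (x y : Fin 3 → ℂ) :
    Dmap πp (iot x) (iot y) = iot (modelD x y) := by
  rw [Dmap, iot_bracket, (proj_eq_s9 hdec _ _).2, map_smul, smul_smul]
  norm_num

lemma Rmap_iot {πk πp : T3 → T3}
    (hdec : ∀ Z ∈ gAlg, πk Z ∈ kAlg ∧ πp Z ∈ pAlg ∧ πk Z + πp Z = Z) (x y z : Fin 3 → ℂ) :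
    Rmap πk πp (iot x) (iot y) (iot z) = iot (modelR x y z) := by
  rw [Rmap, iot_bracket, (proj_eq_s9 hdec _ _).1, (proj_eq_s9 hdec _ _).2, kap_iot_bracket]
  simp only [Dmap_iot hdec, ← map_sub, modelR]

lemma nablaR_iot {πk πp : T3 → T3}
    (hdec : ∀ Z ∈ gAlg, πk Z ∈ kAlg ∧ πp Z ∈ pAlg ∧ πk Z + πp Z = Z) (v x y z : Fin 3 → ℂ) :
    nablaR πk πp (iot v) (iot x) (iot y) (iot z) = iot (modelN v x y z) := by
  simp only [nablaR, Rmap_iot hdec, Dmap_iot hdec, ← map_sub, modelN]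

/-! ### Isometric automorphisms -/

/-- The linear maps of the ambient algebra that preserve the bracket, `𝔨`, `𝔭` and the inner
product. -/
def IsIsoAut (φ : T3 →ₗ[ℝ] T3) : Prop :=
  (∀ X Y : T3, φ ⁅X, Y⁆ = ⁅φ X, φ Y⁆) ∧ Submodule.map φ kAlg = kAlg ∧
    Submodule.map φ pAlg = pAlg ∧ ∀ X Y : T3, iprod (φ X) (φ Y) = iprod X Y

lemma IsIsoAut.comp {φ ψ : T3 →ₗ[ℝ] T3} (hφ : IsIsoAut φ) (hψ : IsIsoAut ψ) :
    IsIsoAut (φ ∘ₗ ψ) := by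
  obtain ⟨h1, h2, h3, h4⟩ := hφ
  obtain ⟨k1, k2, k3, k4⟩ := hψ
  refine ⟨fun X Y => ?_, ?_, ?_, fun X Y => ?_⟩
  · rw [LinearMap.comp_apply, k1, h1]; rfl
  · rw [Submodule.map_comp, k2, h2]
  · rw [Submodule.map_comp, k3, h3]
  · rw [LinearMap.comp_apply, LinearMap.comp_apply, h4, k4]

/-- The cyclic permutation of the three factors of `𝔤`. -/
def cyc : T3 →ₗ[ℝ] T3 where
  toFun X := (X.2.1, X.2.2, X.1)
  map_add' _ _ := rfl
  map_smul' _ _ := rfl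

/-- The primitive cube root of unity `exp(-2πi/3)`. -/
def zeta : ℂ := ⟨-(1 / 2), -(Real.sqrt 3 / 2)⟩

lemma inv_sqrt_twelve : (Real.sqrt 12)⁻¹ = Real.sqrt 3 / 6 := by
  have h3 : Real.sqrt 3 * Real.sqrt 3 = 3 := Real.mul_self_sqrt (by norm_num)
  have h : Real.sqrt 12 = 2 * Real.sqrt 3 := by
    rw [Real.sqrt_eq_iff_mul_self_eq (by norm_num) (by positivity)]
    linear_combination -4 * h3
  rw [h, inv_eq_of_mul_eq_one_right]
  linear_combination (1 / 3) * h3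

lemma zeta_sq : zeta ^ 2 = ⟨-(1 / 2), Real.sqrt 3 / 2⟩ := by
  have h3 : Real.sqrt 3 * Real.sqrt 3 = 3 := Real.mul_self_sqrt (by norm_num)
  rw [zeta, pow_two]
  apply Complex.ext <;> simp
  · linear_combination -(1 / 4) * h3
  · ring

lemma zeta_cube : zeta ^ 3 = 1 := by
  have h3 : Real.sqrt 3 * Real.sqrt 3 = 3 := Real.mul_self_sqrt (by norm_num)
  rw [pow_succ, zeta_sq, zeta]
  apply Complex.ext <;> simp
  · linear_combination (1 / 4) * h3
  · ring

/-- Permuting the factors rotates the multiplicity space of `𝔭 = 𝔰𝔲(2) ⊗ ℝ²` by `-2π/3`. -/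
lemma cyc_iot (z : Fin 3 → ℂ) : cyc (iot z) = iot (zeta • z) := by
  have h3 : Real.sqrt 3 * Real.sqrt 3 = 3 := Real.mul_self_sqrt (by norm_num)
  rw [iot_apply, iot_apply, inv_sqrt_twelve]
  refine Prod.ext (congrArg su ?_) (Prod.ext (congrArg su ?_) (congrArg su ?_)) <;> ext i <;>
    simp [zeta]
  · linear_combination -(1 / 12) * (z i).im * h3
  · linear_combination (1 / 6) * (z i).im * h3
  · linear_combination -(1 / 12) * (z i).im * h3

lemma map_range_eq {E : Type*} [AddCommGroup E] [Module ℝ E] (φ : T3 →ₗ[ℝ] T3) (f : E →ₗ[ℝ] T3)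
    (g g' : E → E) (h : ∀ x, φ (f x) = f (g x)) (hg : ∀ x, g (g' x) = x) :
    Submodule.map φ (LinearMap.range f) = LinearMap.range f := by
  apply le_antisymm
  · rintro _ ⟨_, ⟨x, rfl⟩, rfl⟩
    exact ⟨g x, (h x).symm⟩
  · rintro _ ⟨x, rfl⟩
    exact ⟨f (g' x), ⟨_, rfl⟩, by rw [h, hg]⟩

lemma isIsoAut_cyc : IsIsoAut cyc := by
  refine ⟨fun X Y => rfl, ?_, ?_, fun X Y => ?_⟩
  · rw [kAlg_eq_s9]
    exact map_range_eq cyc kap id id (fun _ => rfl) (fun _ => rfl)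
  · rw [pAlg_eq_s9]
    refine map_range_eq cyc iot _ (fun z => zeta ^ 2 • z) cyc_iot fun z => ?_
    rw [smul_smul, ← pow_succ', zeta_cube, one_smul]
  · simp only [iprod, cyc, LinearMap.coe_mk, AddHom.coe_mk]
    congr 2
    ring

/-- Conjugation by the unit element `N = su u` of `𝔰𝔲(2)`, whose inverse is `-N`. -/
def conjSu (u : Fin 3 → ℝ) : M2 →ₗ[ℝ] M2 where
  toFun X := -(su u * X * su u)
  map_add' X Y := by rw [mul_add, add_mul, neg_add]
  map_smul' r X := by simp

lemma su_mul_su {u : Fin 3 → ℝ} (hu : u ⬝ᵥ u = 1) : su u * su u = -1 := by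
  simp only [dotProduct, Fin.sum_univ_three] at hu
  rw [su_eq]
  ext i j
  fin_cases i <;> fin_cases j <;> apply Complex.ext <;> simp <;> linarith

lemma conjSu_mul {u : Fin 3 → ℝ} (hu : u ⬝ᵥ u = 1) (X Y : M2) :
    conjSu u (X * Y) = conjSu u X * conjSu u Y := by
  have h : conjSu u X * conjSu u Y = su u * X * (su u * su u) * Y * su u := by
    simp only [conjSu, LinearMap.coe_mk, AddHom.coe_mk]
    noncomm_ring
  rw [h, su_mul_su hu]
  simp only [conjSu, LinearMap.coe_mk, AddHom.coe_mk]
  noncomm_ring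

lemma trace_conjSu {u : Fin 3 → ℝ} (hu : u ⬝ᵥ u = 1) (X : M2) :
    (conjSu u X).trace = X.trace := by
  simp only [conjSu, LinearMap.coe_mk, AddHom.coe_mk]
  rw [Matrix.trace_neg, Matrix.trace_mul_comm, ← mul_assoc, su_mul_su hu]
  simp

/-- On `𝔰𝔲(2) ≅ ℝ³`, conjugation by a unit element is the half-turn about it. -/
lemma conjSu_su {u : Fin 3 → ℝ} (hu : u ⬝ᵥ u = 1) (a : Fin 3 → ℝ) :
    conjSu u (su a) = su ((2 * (u ⬝ᵥ a)) • u - a) := by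
  have h : su u * su a = -(su a * su u) - (2 * (u ⬝ᵥ a)) • (1 : M2) := by
    simp only [dotProduct, Fin.sum_univ_three]
    rw [su_eq, su_eq]
    ext i j
    fin_cases i <;> fin_cases j <;> apply Complex.ext <;> simp <;> ring
  simp only [conjSu, LinearMap.coe_mk, AddHom.coe_mk]
  rw [h, sub_mul, neg_mul, mul_assoc, su_mul_su hu, map_sub, map_smul]
  simp

/-- Simultaneous conjugation of the three factors. -/
def conj3 (u : Fin 3 → ℝ) : T3 →ₗ[ℝ] T3 :=
  (conjSu u).prodMap ((conjSu u).prodMap (conjSu u))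

lemma conj3_iot {u : Fin 3 → ℝ} (hu : u ⬝ᵥ u = 1) (z : Fin 3 → ℂ) :
    conj3 u (iot z) = iot (halfTurn u z) := by
  rw [iot_apply, iot_apply, conj3, LinearMap.prodMap_apply, LinearMap.prodMap_apply]
  simp only [conjSu_su hu]
  refine Prod.ext (congrArg su ?_) (Prod.ext (congrArg su ?_) (congrArg su ?_)) <;> ext i <;>
    simp [halfTurn_apply, dotProduct, Fin.sum_univ_three] <;> ring

lemma isIsoAut_conj3 {u : Fin 3 → ℝ} (hu : u ⬝ᵥ u = 1) : IsIsoAut (conj3 u) := by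
  have hb : ∀ X Y : M2, conjSu u ⁅X, Y⁆ = ⁅conjSu u X, conjSu u Y⁆ := by
    intro X Y
    rw [Ring.lie_def, Ring.lie_def, map_sub, conjSu_mul hu, conjSu_mul hu]
  refine ⟨fun X Y => ?_, ?_, ?_, fun X Y => ?_⟩
  · exact Prod.ext (hb _ _) (Prod.ext (hb _ _) (hb _ _))
  · rw [kAlg_eq_s9]
    refine map_range_eq (conj3 u) kap (fun a => (2 * (u ⬝ᵥ a)) • u - a)
      (fun a => (2 * (u ⬝ᵥ a)) • u - a) (fun a => ?_) fun a => ?_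
    · rw [kap_apply, kap_apply, ← conjSu_su hu]; rfl
    · rw [dotProduct_sub, dotProduct_smul, hu, smul_eq_mul, mul_one]
      module
  · rw [pAlg_eq_s9]
    exact map_range_eq (conj3 u) iot (halfTurn u) (halfTurn u) (conj3_iot hu)
      (halfTurn_halfTurn hu)
  · simp only [iprod, conj3, LinearMap.prodMap_apply, ← conjSu_mul hu, trace_conjSu hu]

/-- Every multiplication of `𝔭 ≅ ℂ³` by a cube root of unity extends to an isometric
automorphism. -/
lemma exists_cube_root_aut {μ : ℂ} (hμ : μ ^ 3 = 1) :
    ∃ ψ : T3 →ₗ[ℝ] T3, IsIsoAut ψ ∧ ∃ ν : ℂ, ν * μ = 1 ∧ ∀ z, ψ (iot z) = iot (ν • z) := by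
  have hz : zeta * zeta ^ 2 = 1 := by rw [← pow_succ', zeta_cube]
  have hsum : zeta + zeta ^ 2 = -1 := by
    rw [zeta_sq, zeta]
    apply Complex.ext <;> simp
    norm_num
  have hfac : (μ - 1) * ((μ - zeta) * (μ - zeta ^ 2)) = 0 := by
    linear_combination hμ - (μ - 1) * μ * hsum + (μ - 1) * hz
  rcases mul_eq_zero.1 hfac with h | h
  · refine ⟨cyc ∘ₗ cyc ∘ₗ cyc, isIsoAut_cyc.comp (isIsoAut_cyc.comp isIsoAut_cyc), 1, ?_,
      fun z => ?_⟩
    · rw [one_mul, sub_eq_zero.1 h]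
    · rw [one_smul]; rfl
  rcases mul_eq_zero.1 h with h | h
  · refine ⟨cyc ∘ₗ cyc, isIsoAut_cyc.comp isIsoAut_cyc, zeta ^ 2, ?_, fun z => ?_⟩
    · rw [sub_eq_zero.1 h, mul_comm, hz]
    · rw [LinearMap.comp_apply, cyc_iot, cyc_iot, smul_smul, pow_two]
  · refine ⟨cyc, isIsoAut_cyc, zeta, ?_, cyc_iot⟩
    rw [sub_eq_zero.1 h, hz]

/-- A subspace of dimension at most three containing the image of a frame is spanned by it. -/
lemma eq_span_frame {ε : ℂ} (hε : ε ≠ 0) {S : Submodule ℝ T3} [Module.Finite ℝ S]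
    (hS : Module.finrank ℝ S ≤ 3)
    (h1 : iot ![1, 0, 0] ∈ S) (h2 : iot ![0, ε, 0] ∈ S) (h3 : iot ![0, 0, ε] ∈ S) :
    S = Submodule.span ℝ {iot ![1, 0, 0], iot ![0, ε, 0], iot ![0, 0, ε]} := by
  symm
  apply Submodule.eq_of_le_of_finrank_le
  · rw [Submodule.span_le]
    rintro _ (rfl | rfl | rfl) <;> assumption
  · refine hS.trans ?_
    have hli : LinearIndependent ℝ
        ![(![1, 0, 0] : Fin 3 → ℂ), ![0, ε, 0], ![0, 0, ε]] := by
      rw [Fintype.linearIndependent_iff]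
      intro g hg
      have hi := fun i => congrFun hg i
      have h0 := hi 0
      have h1 := hi 1
      have h2 := hi 2
      simp [Fin.sum_univ_three, hε] at h0 h1 h2
      intro i
      fin_cases i <;> simpa
    have hli' := hli.map' iot (LinearMap.ker_eq_bot.2 iot_injective)
    have hr : Set.range (iot ∘ ![(![1, 0, 0] : Fin 3 → ℂ), ![0, ε, 0], ![0, 0, ε]]) =
        {iot ![1, 0, 0], iot ![0, ε, 0], iot ![0, 0, ε]} := by
      rw [Set.range_comp, Matrix.range_cons, Matrix.range_cons_cons_empty, Set.image_union,
        Set.image_pair, Set.image_singleton, Set.singleton_union]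
    rw [← hr, finrank_span_eq_card hli', Fintype.card_fin]

/-- Every 3-dimensional subspace `𝔳 ⊆ 𝔭` invariant under `R`
and `∇R` is carried, by some isometric real Lie algebra automorphism `φ` of
`𝔤` preserving `𝔨` and `𝔭`, to either `𝔭₁` (tangent to the round-sphere
fiber `S³(2/√3)`) or `span{e₁,e₅,e₆}` (tangent to the Berger sphere
`S³_{ℂ,1/3}(2)`). -/
theorem three_dimensional_invariant_subspace_S3S3
    (πk πp : T3 → T3)
    (hdec : ∀ Z ∈ gAlg, πk Z ∈ kAlg ∧ πp Z ∈ pAlg ∧ πk Z + πp Z = Z)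
    (v : Submodule ℝ T3) (hdim : Module.finrank ℝ v = 3) (hvp : v ≤ pAlg)
    (hR : ∀ X ∈ v, ∀ Y ∈ v, ∀ Z ∈ v, Rmap πk πp X Y Z ∈ v)
    (hnR : ∀ V ∈ v, ∀ X ∈ v, ∀ Y ∈ v, ∀ Z ∈ v, nablaR πk πp V X Y Z ∈ v) :
    ∃ φ : T3 →ₗ[ℝ] T3,
      (∀ X ∈ gAlg, ∀ Y ∈ gAlg, φ ⁅X, Y⁆ = ⁅φ X, φ Y⁆) ∧
      Submodule.map φ kAlg = kAlg ∧
      Submodule.map φ pAlg = pAlg ∧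
      (∀ X ∈ gAlg, ∀ Y ∈ gAlg, iprod (φ X) (φ Y) = iprod X Y) ∧
      (Submodule.map φ v = p1 ∨
        Submodule.map φ v = Submodule.span ℝ {e1, e5, e6}) := by
  set W := v.comap iot with hW
  have hWv : W.map iot = v := by
    rw [hW, Submodule.map_comap_eq, ← pAlg_eq_s9]
    exact inf_eq_right.2 hvp
  have hWdim : Module.finrank ℝ W = 3 := by
    have e := (Submodule.equivMapOfInjective iot iot_injective W).finrank_eq
    rw [hWv] at e
    exact e.trans hdim
  have hWR : ∀ x ∈ W, ∀ y ∈ W, ∀ z ∈ W, modelR x y z ∈ W := by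
    intro x hx y hy z hz
    have h := hR _ hx _ hy _ hz
    rwa [Rmap_iot hdec] at h
  have hWN : ∀ w ∈ W, ∀ x ∈ W, ∀ y ∈ W, ∀ z ∈ W, modelN w x y z ∈ W := by
    intro w hw x hx y hy z hz
    have h := hnR _ hw _ hx _ hy _ hz
    rwa [nablaR_iot hdec] at h
  obtain ⟨u, μ, ε, hu, hμ, hε, h1, h2, h3⟩ := exists_frame_cube hWdim hWR hWN
  obtain ⟨ψ, hψ, ν, hνμ, hψi⟩ := exists_cube_root_aut hμ
  obtain ⟨a1, a2, a3, a4⟩ := hψ.comp (isIsoAut_conj3 hu)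
  refine ⟨ψ ∘ₗ conj3 u, fun X _ Y _ => a1 X Y, a2, a3, fun X _ Y _ => a4 X Y, ?_⟩
  have himg : ∀ z, halfTurn u z ∈ W → iot (ν • z) ∈ Submodule.map (ψ ∘ₗ conj3 u) v := by
    intro z hz
    refine ⟨_, hz, ?_⟩
    rw [LinearMap.comp_apply, conj3_iot hu, halfTurn_halfTurn hu, hψi]
  have : Module.Finite ℝ v := Module.finite_of_finrank_pos (by omega)
  have hdim' : Module.finrank ℝ (Submodule.map (ψ ∘ₗ conj3 u) v) ≤ 3 :=
    (Submodule.finrank_map_le _ v).trans hdim.le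
  have hνε : ν * (μ * ε) = ε := by rw [← mul_assoc, hνμ, one_mul]
  have b1 := himg _ h1
  have b2 := himg _ h2
  have b3 := himg _ h3
  simp only [Matrix.smul_cons, Matrix.smul_empty, smul_eq_mul, mul_zero, hνμ, hνε] at b1 b2 b3
  have hspan := eq_span_frame (by rcases hε with rfl | rfl <;> simp) hdim' b1 b2 b3
  rcases hε with rfl | rfl
  · left
    rw [hspan, iot_e1, iot_e2, iot_e3, p1]
  · right
    rw [hspan, iot_e1, iot_e5, iot_e6]

end
end

section
/- The subspace 𝔟 = ℝ·(H,H,H) ⊕ span{e₁, e₅, e₆} is a 4-dimensional Lie subalgebra of 𝔤 = 𝔰𝔲(2) ⊕ 𝔰𝔲(2) ⊕ 𝔰𝔲(2) which is canonically embedded with respect to the decomposition 𝔤 = 𝔨 ⊕ 𝔭, i.e. 𝔟 = (𝔟 ∩ 𝔨) ⊕ (𝔟 ∩ 𝔭), with 𝔟 ∩ 𝔨 = ℝ·(H,H,H) and 𝔟 ∩ 𝔭 = span{e₁, e₅, e₆}. (This subalgebra gives rise to the Lagrangian totally geodesic Berger sphere S³_{ℂ,1/3}(2) in nearly Kähler S³×S³.)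 -/
/-!
The proof rests on the three relations `[H,E] = -2F`, `[F,H] = -2E`, `[E,F] = -2H` and on
the map `σ (X₁,X₂,X₃) = X₁ + X₂ + X₃`. The map `σ` vanishes on `𝔭` and is `3A` at `(A,A,A)`, so
`𝔨 ∩ 𝔭 = 0` (`disjoint_kAlg_pAlg`). Since `𝔟` is by definition the sum of `ℝ·(H,H,H) ⊆ 𝔨` and
`span{e₁,e₅,e₆} ⊆ 𝔭`, the modular law turns this into the two intersection formulas, and with them
the canonical embedding. Closure under the bracket is checked on generators
(`lie_mem_span_of_generators`); the only such bracket with a component in each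
of the two summands is `[e₅,e₆] = -(1/2)(H,0,H)`, where
`(H,0,H) = (2/3)(H,H,H) + (1/3)(H,-2H,H)`. The dimension is the number of generators, which are
independent (`linearIndependent_bAlg`).
-/

/- Setup: the homogeneous nearly Kähler S³×S³ = SU(2)³/ΔSU(2). -/

noncomputable section
open Matrix

/-- the subalgebra `𝔟 = ℝ·(H,H,H) ⊕ span{e₁,e₅,e₆}`. -/
def bAlg : Submodule ℝ T3 := Submodule.span ℝ {((Hm, Hm, Hm) : T3), e1, e5, e6}

/- Bilinearity of the ring commutator: the `LieRing` structure of an associative ring is not a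
global instance, so the Mathlib lemmas `lie_add`, `lie_smul`, … do not apply to `⁅·, ·⁆` on `T3`. -/

section Commutator
variable {A : Type*} [Ring A]

lemma comm_zero_right (x : A) : ⁅x, (0 : A)⁆ = 0 := by simp [Ring.lie_def]

lemma comm_zero_left (x : A) : ⁅(0 : A), x⁆ = 0 := by simp [Ring.lie_def]

lemma comm_self (x : A) : ⁅x, x⁆ = 0 := by simp [Ring.lie_def]

lemma comm_skew (x y : A) : ⁅x, y⁆ = -⁅y, x⁆ := by simp [Ring.lie_def]

lemma comm_neg_right (x y : A) : ⁅x, -y⁆ = -⁅x, y⁆ := by simp only [Ring.lie_def]; noncomm_ring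

lemma comm_neg_left (x y : A) : ⁅-x, y⁆ = -⁅x, y⁆ := by simp only [Ring.lie_def]; noncomm_ring

lemma comm_add_right (x y z : A) : ⁅x, y + z⁆ = ⁅x, y⁆ + ⁅x, z⁆ := by
  simp only [Ring.lie_def]; noncomm_ring

lemma comm_add_left (x y z : A) : ⁅x + y, z⁆ = ⁅x, z⁆ + ⁅y, z⁆ := by
  simp only [Ring.lie_def]; noncomm_ring

lemma comm_smul_right [Algebra ℝ A] (r : ℝ) (x y : A) : ⁅x, r • y⁆ = r • ⁅x, y⁆ := by
  simp [Ring.lie_def, smul_sub]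

lemma comm_smul_left [Algebra ℝ A] (r : ℝ) (x y : A) : ⁅r • x, y⁆ = r • ⁅x, y⁆ := by
  simp [Ring.lie_def, smul_sub]

end Commutator

lemma lie_Hm_Em : ⁅Hm, Em⁆ = (-2 : ℝ) • Fm := by
  ext i j
  fin_cases i <;> fin_cases j <;> simp [Ring.lie_def, Hm, Em, Fm] <;> ring

lemma lie_Fm_Hm : ⁅Fm, Hm⁆ = (-2 : ℝ) • Em := by
  ext i j
  fin_cases i <;> fin_cases j <;> simp [Ring.lie_def, Hm, Em, Fm] <;> ring

lemma lie_Em_Fm : ⁅Em, Fm⁆ = (-2 : ℝ) • Hm := by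
  ext i j
  fin_cases i <;> fin_cases j <;> simp [Ring.lie_def, Hm, Em, Fm] <;> ring

lemma lie_mk (A B C A' B' C' : M2) :
    ⁅((A, B, C) : T3), ((A', B', C') : T3)⁆ = (⁅A, A'⁆, ⁅B, B'⁆, ⁅C, C'⁆) := rfl

lemma lie_mem_span_of_generators {S : Set T3}
    (h : ∀ x ∈ S, ∀ y ∈ S, ⁅x, y⁆ ∈ Submodule.span ℝ S) :
    ∀ X ∈ Submodule.span ℝ S, ∀ Y ∈ Submodule.span ℝ S, ⁅X, Y⁆ ∈ Submodule.span ℝ S := by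
  intro X hX Y hY
  induction hX, hY using Submodule.span_induction₂ with
  | mem_mem x y hx hy => exact h x hx y hy
  | zero_left y hy => rw [comm_zero_left]; exact zero_mem _
  | zero_right x hx => rw [comm_zero_right]; exact zero_mem _
  | add_left x y z hx hy hz h₁ h₂ => rw [comm_add_left]; exact add_mem h₁ h₂
  | add_right x y z hx hy hz h₁ h₂ => rw [comm_add_right]; exact add_mem h₁ h₂
  | smul_left r x y hx hy h₁ => rw [comm_smul_left]; exact Submodule.smul_mem _ r h₁
  | smul_right r x y hx hy h₁ => rw [comm_smul_right]; exact Submodule.smul_mem _ r h₁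

lemma lie_hhh_e1 : ⁅((Hm, Hm, Hm) : T3), e1⁆ = 0 := by
  simp [e1, lie_mk, comm_neg_right, comm_smul_right, comm_self]

lemma lie_hhh_e5 : ⁅((Hm, Hm, Hm) : T3), e5⁆ = (-2 : ℝ) • e6 := by
  simp [e5, e6, lie_mk, comm_neg_right, comm_smul_right, comm_zero_right, lie_Hm_Em]

lemma lie_hhh_e6 : ⁅((Hm, Hm, Hm) : T3), e6⁆ = (2 : ℝ) • e5 := by
  simp [e5, e6, lie_mk, comm_neg_right, comm_smul_right, comm_zero_right, comm_skew Hm Fm,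
    lie_Fm_Hm]

lemma lie_e1_e5 : ⁅e1, e5⁆ = ((Real.sqrt 12)⁻¹ * -2) • e6 := by
  simp only [e1, e5, e6, comm_smul_left, comm_smul_right, lie_mk, comm_neg_right,
    comm_zero_right, lie_Hm_Em, mul_smul]
  simp [smul_smul, mul_comm]

lemma lie_e1_e6 : ⁅e1, e6⁆ = ((Real.sqrt 12)⁻¹ * 2) • e5 := by
  simp only [e1, e5, e6, comm_smul_left, comm_smul_right, lie_mk, comm_neg_right,
    comm_zero_right, comm_skew Hm Fm, lie_Fm_Hm, mul_smul]
  simp [smul_smul, mul_comm]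

/-- `e₁` carries the normalizing factor `1/√12`, which the coefficient `-√12/6` cancels. -/
lemma lie_e5_e6 : ⁅e5, e6⁆ =
    (-1 / 3 : ℝ) • ((Hm, Hm, Hm) : T3) + (-(Real.sqrt 12) / 6) • e1 := by
  have h12 : Real.sqrt 12 ≠ 0 := by positivity
  have hc : -(Real.sqrt 12) / 6 * (Real.sqrt 12)⁻¹ = -1 / 6 := by field_simp
  simp only [e1, e5, e6, comm_smul_left, comm_smul_right, lie_mk, comm_neg_right,
    comm_neg_left, comm_zero_right, neg_neg, lie_Em_Fm, smul_smul, hc]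
  simp only [Prod.smul_mk, Prod.mk_add_mk, smul_smul, smul_zero, ← add_smul, Prod.mk.injEq]
  norm_num

lemma bAlg_lie_mem : ∀ X ∈ bAlg, ∀ Y ∈ bAlg, ⁅X, Y⁆ ∈ bAlg := by
  have mh : ((Hm, Hm, Hm) : T3) ∈ bAlg := Submodule.subset_span (by simp)
  have m1 : e1 ∈ bAlg := Submodule.subset_span (by simp)
  have m5 : e5 ∈ bAlg := Submodule.subset_span (by simp)
  have m6 : e6 ∈ bAlg := Submodule.subset_span (by simp)
  have h1 : ⁅((Hm, Hm, Hm) : T3), e1⁆ ∈ bAlg := by rw [lie_hhh_e1]; exact zero_mem _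
  have h5 : ⁅((Hm, Hm, Hm) : T3), e5⁆ ∈ bAlg := by
    rw [lie_hhh_e5]; exact bAlg.smul_mem _ m6
  have h6 : ⁅((Hm, Hm, Hm) : T3), e6⁆ ∈ bAlg := by
    rw [lie_hhh_e6]; exact bAlg.smul_mem _ m5
  have h15 : ⁅e1, e5⁆ ∈ bAlg := by rw [lie_e1_e5]; exact bAlg.smul_mem _ m6
  have h16 : ⁅e1, e6⁆ ∈ bAlg := by rw [lie_e1_e6]; exact bAlg.smul_mem _ m5
  have h56 : ⁅e5, e6⁆ ∈ bAlg := by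
    rw [lie_e5_e6]; exact add_mem (bAlg.smul_mem _ mh) (bAlg.smul_mem _ m1)
  have skew : ∀ x y : T3, ⁅x, y⁆ ∈ bAlg → ⁅y, x⁆ ∈ bAlg := fun x y h => by
    rw [comm_skew]; exact neg_mem h
  have self : ∀ x : T3, ⁅x, x⁆ ∈ bAlg := fun x => by rw [comm_self]; exact zero_mem _
  refine lie_mem_span_of_generators ?_
  rintro x (rfl | rfl | rfl | rfl) y (rfl | rfl | rfl | rfl)
  exacts [self _, h1, h5, h6, skew _ _ h1, self _, h15, h16,
    skew _ _ h5, skew _ _ h15, self _, h56, skew _ _ h6, skew _ _ h16, skew _ _ h56, self _]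

lemma sum_eq_zero_of_mem_pAlg {X : T3} (hX : X ∈ pAlg) : X.1 + X.2.1 + X.2.2 = 0 := by
  induction hX using Submodule.span_induction with
  | mem x hx =>
    rcases hx with rfl | rfl | rfl | rfl | rfl | rfl <;>
      simp only [e1, e2, e3, e4, e5, e6, Prod.smul_mk] <;> module
  | zero => simp
  | add x y _ _ hx hy =>
    have : (x + y).1 + (x + y).2.1 + (x + y).2.2
        = (x.1 + x.2.1 + x.2.2) + (y.1 + y.2.1 + y.2.2) := by
      simp only [Prod.fst_add, Prod.snd_add]; abel
    rw [this, hx, hy, add_zero]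
  | smul r x _ hx =>
    simp only [Prod.smul_fst, Prod.smul_snd, ← smul_add, hx, smul_zero]

lemma diagonal_of_mem_kAlg {X : T3} (hX : X ∈ kAlg) : X = (X.1, X.1, X.1) := by
  induction hX using Submodule.span_induction with
  | mem x hx => rcases hx with rfl | rfl | rfl <;> rfl
  | zero => rfl
  | add x y _ _ hx hy => rw [hx, hy]; rfl
  | smul r x _ hx => rw [hx]; rfl

lemma disjoint_kAlg_pAlg : Disjoint kAlg pAlg := by
  rw [Submodule.disjoint_def]
  intro X hk hp
  have hd := diagonal_of_mem_kAlg hk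
  have hs := sum_eq_zero_of_mem_pAlg hp
  rw [hd] at hs
  have h3 : (3 : ℝ) • X.1 = 0 := by rw [← hs]; module
  have h0 : X.1 = 0 := by simpa using h3
  rw [hd, h0]; rfl

/-- Independence is read off from the `(0,0)` entries of the first two components, which see only
`(H,H,H)` and `e₁`, and from the `(1,0)` entry of the first component, whose real part sees only
`e₅` and whose imaginary part sees only `e₆`. -/
lemma linearIndependent_bAlg : LinearIndependent ℝ ![((Hm, Hm, Hm) : T3), e1, e5, e6] := by
  have h12 : Real.sqrt 12 ≠ 0 := by positivity
  rw [Fintype.linearIndependent_iff]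
  intro g hg
  have a1 := congrArg (fun X : T3 => (X.1 0 0).im) hg
  have a2 := congrArg (fun X : T3 => (X.2.1 0 0).im) hg
  have a3 := congrArg (fun X : T3 => (X.1 1 0).re) hg
  have a4 := congrArg (fun X : T3 => (X.1 1 0).im) hg
  simp [Fin.sum_univ_four, e1, e5, e6, Hm, Em, Fm] at a1 a2 a3 a4
  have b1 : g 1 * Real.sqrt 12 = 0 := by linarith
  have c0 : g 0 = 0 := by linarith
  have c1 : g 1 = 0 := by simpa [h12] using b1
  intro i
  fin_cases i <;> simp [*]

lemma finrank_bAlg : Module.finrank ℝ bAlg = 4 := by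
  have h := finrank_span_eq_card linearIndependent_bAlg
  have hr : Set.range ![((Hm, Hm, Hm) : T3), e1, e5, e6]
      = {((Hm, Hm, Hm) : T3), e1, e5, e6} := by
    simp only [Matrix.range_cons, Matrix.range_empty, Set.singleton_union,
      Set.union_empty]
  rw [hr] at h
  exact h

/-- `𝔟 = ℝ·(H,H,H) ⊕ span{e₁,e₅,e₆}` is a 4-dimensional Lie
subalgebra of `𝔤 = 𝔰𝔲(2)³` which is canonically embedded, with
`𝔟 ∩ 𝔨 = ℝ·(H,H,H)` and `𝔟 ∩ 𝔭 = span{e₁,e₅,e₆}`. It gives rise to the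
Lagrangian totally geodesic Berger sphere `S³_{ℂ,1/3}(2)` in
nearly Kähler `S³×S³`. -/
theorem berger_subalgebra_S3S3 :
    Module.finrank ℝ bAlg = 4 ∧
    bAlg ≤ gAlg ∧
    (∀ X ∈ bAlg, ∀ Y ∈ bAlg, ⁅X, Y⁆ ∈ bAlg) ∧
    bAlg = (bAlg ⊓ kAlg) ⊔ (bAlg ⊓ pAlg) ∧
    bAlg ⊓ kAlg = Submodule.span ℝ {((Hm, Hm, Hm) : T3)} ∧
    bAlg ⊓ pAlg = Submodule.span ℝ {e1, e5, e6} := by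
  have hb : bAlg = Submodule.span ℝ {((Hm, Hm, Hm) : T3)} ⊔ Submodule.span ℝ {e1, e5, e6} :=
    Submodule.span_insert _ _
  have hK : Submodule.span ℝ {((Hm, Hm, Hm) : T3)} ≤ kAlg := Submodule.span_mono (by simp)
  have hP : Submodule.span ℝ {e1, e5, e6} ≤ pAlg := by
    refine Submodule.span_mono ?_
    rintro x (rfl | rfl | rfl) <;> simp
  have hbk : bAlg ⊓ kAlg = Submodule.span ℝ {((Hm, Hm, Hm) : T3)} := by
    rw [hb, sup_inf_assoc_of_le _ hK, (disjoint_kAlg_pAlg.symm.mono_left hP).eq_bot, sup_bot_eq]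
  have hbp : bAlg ⊓ pAlg = Submodule.span ℝ {e1, e5, e6} := by
    rw [hb, sup_comm, sup_inf_assoc_of_le _ hP, (disjoint_kAlg_pAlg.mono_left hK).eq_bot,
      sup_bot_eq]
  exact ⟨finrank_bAlg, hb ▸ sup_le_sup hK hP, bAlg_lie_mem, by rw [hbk, hbp]; exact hb, hbk, hbp⟩

end
end
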